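/- Bao–Wang ıSchur duality (Theorem 1.6, quoted from Bao–Wang): The subalgebras Φ(U_q^ı) and Ψ(H(B_m)) of End_K(V̄^⊗m) commute with each other and form double centralizers: an operator A ∈ End_K(V̄^⊗m) commutes with every element of Φ(U_q^ı) if and only if A ∈ Ψ(H(B_m)), and A commutes with every element of Ψ(H(B_m)) if and only if A ∈ Φ(U_q^ı). Here Ψ(H(B_m)) denotes the unital subalgebra of End_K(V̄^⊗m) generated by the operators Ψ(H_0), …, Ψ(H_{m−1}). -/

import Mathlib

/-!
All operators are identified with matrices indexed by the functions `f : {1,…,m} → 𝕀(2r+4)`.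

**The actions commute.** A generator of `Ψ(H(B_m))` acts on one position (`H_0`) or on two adjacent
positions (`H_i`), and the operators `𝔼_i`, `𝔽_i`, `𝕂_i` are sums of pure tensors. The commutation
therefore reduces to identities between matrices on one or two positions (`OneSite`, `TwoSite`),
and gives `PhiU_comm_PsiHB`.

**The centralizer of `Ψ(H(B_m))` is `Φ(U_q^ı)`** (`mem_PhiU_of_comm`). The form `∑ X_{gf} Y_{gf}` on
matrices over `ℚ(q)` is anisotropic, as `ℚ(q)` is formally real, so an element of the centralizer
outside `Φ(U_q^ı)` yields a nonzero `X` in the centralizer and orthogonal to `Φ(U_q^ı)`. After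
multiplication by a scalar, `X` is regular at `q = 1` with a nonzero value `Y` there
(`exists_scale`). At `q = 1` the Hecke algebra becomes the group algebra of the Weyl group of type
`B`, acting by permutations of the positions and reversal of the index at the first position. The
classical theorem (`invariant_mem`) says that a matrix invariant under this group is generated by
the elements `∑_l 1 ⊗ ⋯ ⊗ E ⊗ ⋯ ⊗ 1`, `E = E_{i,i+1} + E_{-i,-(i+1)}`: averaging over the group
gives symmetrised tensors of matrices commuting with the reversal, which are polynomials in such
elements (`symT_mem`), and these matrices are spanned by iterated commutators of the `E` together
with `1` (`prim_mem_of_simple`). As the `E`-elements are specialisations of elements of `Φ(U_q^ı)`,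
`Y` is the specialisation of some `D ∈ Φ(U_q^ı)`. The relation `⟨D, X⟩ = 0` specialises to
`⟨Y, Y⟩ = 0` over `ℚ`, a contradiction.

**The centralizer of `Φ(U_q^ı)` is `Ψ(H(B_m))`** (`mem_PsiHB_of_comm`). The generators of `Ψ(H(B_m))`
have symmetric matrices, so `Ψ(H(B_m))` is closed under transposition. Over a formally real field a
transpose-closed matrix algebra is equal to its bicommutant (`mem_of_bicommutant`), and the
commutant of `Ψ(H(B_m))` is `Φ(U_q^ı)` by the previous part.
-/

noncomputable section

open scoped BigOperators

set_option maxHeartbeats 1000000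
set_option synthInstance.maxHeartbeats 400000

/-- The field `ℚ(q)`. -/
abbrev Kq : Type := RatFunc ℚ

/-- The element `q`, transcendental over `ℚ`. -/
def qv : Kq := RatFunc.X

/-- Index set `𝕀(2r+4)`: the `j`-th element represents the half-integer `j - r - 3/2`. -/
abbrev Idx (r : ℕ) := Fin (2*r+4)

/-- The space `V̄`, with basis `η_j` indexed by `𝕀(2r+4)` (coordinate form). -/
abbrev Vb (r : ℕ) := Idx r → Kq

/-- The tensor power `V̄^⊗m` (coordinates with respect to the basis `M_f`). -/
abbrev TP (r m : ℕ) := (Fin m → Idx r) → Kq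

/-- Basis vector `M_f = η_{f 0} ⊗ ⋯ ⊗ η_{f (m-1)}`. -/
def Mf {r m : ℕ} (f : Fin m → Idx r) : TP r m := Pi.single f 1

/-- For a quantum-group index `a : Fin (2r+3)` (representing `i = a - r - 1 ∈ [-r-1, r+1]`),
the index of `η_{i - 1/2}`. -/
def loI {r : ℕ} (a : Fin (2*r+3)) : Idx r := ⟨a.1, by have := a.2; omega⟩

/-- The index of `η_{i + 1/2}`. -/
def hiI {r : ℕ} (a : Fin (2*r+3)) : Idx r := ⟨a.1+1, by have := a.2; omega⟩

/-- The index of `η_{-r-3/2}`. -/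
def botI (r : ℕ) : Idx r := ⟨0, by omega⟩

/-- The index of `η_{r+3/2}`. -/
def topI (r : ℕ) : Idx r := ⟨2*r+3, by omega⟩

/-- A linear endomorphism of `V̄` of the shape `v ↦ (j ↦ c j * v (t j))`. -/
def diagMove (r : ℕ) (c : Idx r → Kq) (t : Idx r → Idx r) : Module.End Kq (Vb r) where
  toFun v := fun j => c j * v (t j)
  map_add' u v := by funext j; simp [Pi.add_apply, mul_add]
  map_smul' s v := by
    funext j
    simp only [Pi.smul_apply, smul_eq_mul, RingHom.id_apply]
    ring

/-- The operator `e_i` on `V̄`: `e_i η_{i+1/2} = η_{i-1/2}`, zero on other basis vectors. -/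
def opE (r : ℕ) (a : Fin (2*r+3)) : Module.End Kq (Vb r) :=
  diagMove r (fun j => if j = loI a then 1 else 0) (fun j => if j = loI a then hiI a else j)

/-- The operator `f_i` on `V̄`: `f_i η_{i-1/2} = η_{i+1/2}`, zero on other basis vectors. -/
def opF (r : ℕ) (a : Fin (2*r+3)) : Module.End Kq (Vb r) :=
  diagMove r (fun j => if j = hiI a then 1 else 0) (fun j => if j = hiI a then loI a else j)

/-- The operator `κ_i` on `V̄`. -/
def opK (r : ℕ) (a : Fin (2*r+3)) : Module.End Kq (Vb r) :=
  diagMove r (fun j => if j = loI a then qv else if j = hiI a then qv⁻¹ else 1) id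

/-- The operator `κ_i⁻¹` on `V̄`. -/
def opKinv (r : ℕ) (a : Fin (2*r+3)) : Module.End Kq (Vb r) :=
  diagMove r (fun j => if j = loI a then qv⁻¹ else if j = hiI a then qv else 1) id

/-- A linear endomorphism of `V̄^⊗m` given by a "matrix" `c`. -/
def matOp (r m : ℕ) (c : (Fin m → Idx r) → (Fin m → Idx r) → Kq) : Module.End Kq (TP r m) where
  toFun v := fun g => ∑ f : Fin m → Idx r, c g f * v f
  map_add' u v := by
    funext g
    simp [Pi.add_apply, mul_add, Finset.sum_add_distrib]
  map_smul' s v := by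
    funext g
    simp only [Pi.smul_apply, smul_eq_mul, RingHom.id_apply, Finset.mul_sum]
    exact Finset.sum_congr rfl (fun f _ => by ring)

/-- The tensor product `A 0 ⊗ A 1 ⊗ ⋯ ⊗ A (m-1)` of endomorphisms of `V̄`,
as an endomorphism of `V̄^⊗m`. -/
def tensorOp (r m : ℕ) (A : Fin m → Module.End Kq (Vb r)) : Module.End Kq (TP r m) :=
  matOp r m (fun g f => ∏ k : Fin m, (A k) (Pi.single (f k) 1) (g k))
/-- `𝔼_i = Σ_j id^{⊗(j-1)} ⊗ e_i ⊗ (κ_i⁻¹)^{⊗(m-j)}` on `V̄^⊗m`. -/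
def opEE (r m : ℕ) (a : Fin (2*r+3)) : Module.End Kq (TP r m) :=
  ∑ j : Fin m, tensorOp r m (fun k =>
    if (k : ℕ) < (j : ℕ) then 1 else if k = j then opE r a else opKinv r a)

/-- `𝔽_i = Σ_j κ_i^{⊗(j-1)} ⊗ f_i ⊗ id^{⊗(m-j)}` on `V̄^⊗m`. -/
def opFF (r m : ℕ) (a : Fin (2*r+3)) : Module.End Kq (TP r m) :=
  ∑ j : Fin m, tensorOp r m (fun k =>
    if (k : ℕ) < (j : ℕ) then opK r a else if k = j then opF r a else 1)

/-- `𝕂_i = κ_i^{⊗m}`. -/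
def opKK (r m : ℕ) (a : Fin (2*r+3)) : Module.End Kq (TP r m) :=
  tensorOp r m (fun _ => opK r a)

/-- `𝕂_i⁻¹ = (κ_i⁻¹)^{⊗m}`. -/
def opKKinv (r m : ℕ) (a : Fin (2*r+3)) : Module.End Kq (TP r m) :=
  tensorOp r m (fun _ => opKinv r a)

/-- `𝕜_i = 𝕂_i 𝕂_{-i}⁻¹` (the index `-i` corresponds to `Fin.rev a`). -/
def opkk (r m : ℕ) (a : Fin (2*r+3)) : Module.End Kq (TP r m) :=
  opKK r m a * opKKinv r m a.rev

/-- `𝕜_i⁻¹ = 𝕂_{-i} 𝕂_i⁻¹`. -/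
def opkkInv (r m : ℕ) (a : Fin (2*r+3)) : Module.End Kq (TP r m) :=
  opKK r m a.rev * opKKinv r m a

/-- The index `a` corresponding to `i = 0`. -/
def midI (r : ℕ) : Fin (2*r+3) := ⟨r+1, by omega⟩

/-- `ℬ_i = 𝔼_i + 𝔽_{-i} 𝕂_i⁻¹` for `i ≠ 0`. -/
def opB (r m : ℕ) (a : Fin (2*r+3)) : Module.End Kq (TP r m) :=
  opEE r m a + opFF r m a.rev * opKKinv r m a

/-- `ℬ_0 = 𝔼_0 + q 𝔽_0 𝕂_0⁻¹ + 𝕂_0⁻¹`. -/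
def opB0 (r m : ℕ) : Module.End Kq (TP r m) :=
  opEE r m (midI r) + qv • (opFF r m (midI r) * opKKinv r m (midI r)) + opKKinv r m (midI r)

/-- Generating set of the Levi-type ıquantum group image `Φ(L_q^ı)`:
`ℬ_0`, the `ℬ_i` with `0 ≠ i`, `-r ≤ i ≤ r`, and the `𝕜_i^{±1}` with `-r-1 ≤ i ≤ r+1`. -/
def LeviSet (r m : ℕ) : Set (Module.End Kq (TP r m)) :=
  {opB0 r m} ∪ (opB r m '' {a | a ≠ midI r ∧ 0 < (a : ℕ) ∧ (a : ℕ) < 2*r+2}) ∪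
    Set.range (opkk r m) ∪ Set.range (opkkInv r m)

/-- `Φ(L_q^ı)`, the image of the Levi-type ıquantum group in `End(V̄^⊗m)`. -/
def PhiL (r m : ℕ) : Subalgebra Kq (Module.End Kq (TP r m)) :=
  Algebra.adjoin Kq (LeviSet r m)

/-- The operator `Ψ(H_0)` on `V̄^⊗m`. -/
def R0op (r m : ℕ) : Module.End Kq (TP r m) :=
  if h : 0 < m then
    { toFun := fun v g =>
        v (Function.update g ⟨0, h⟩ (Fin.rev (g ⟨0, h⟩))) +
          (if g ⟨0, h⟩ < Fin.rev (g ⟨0, h⟩) then (qv⁻¹ - qv) * v g else 0)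
      map_add' := fun u v => by
        funext g
        simp only [Pi.add_apply]
        split_ifs <;> ring
      map_smul' := fun s v => by
        funext g
        simp only [Pi.smul_apply, smul_eq_mul, RingHom.id_apply]
        split_ifs <;> ring }
  else 1

/-- The operator `Ψ(H_{p+1})` on `V̄^⊗m`, interchanging tensor positions `p` and `p+1`
(0-based). -/
def Rsw (r m : ℕ) (p : ℕ) : Module.End Kq (TP r m) :=
  if h : p + 1 < m then
    { toFun := fun v g =>
        if g ⟨p, by omega⟩ = g ⟨p+1, h⟩ then qv⁻¹ * v g
        else v (g ∘ Equiv.swap ⟨p, by omega⟩ ⟨p+1, h⟩) +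
          (if g ⟨p+1, h⟩ < g ⟨p, by omega⟩ then (qv⁻¹ - qv) * v g else 0)
      map_add' := fun u v => by
        funext g
        simp only [Pi.add_apply, Function.comp_apply]
        split_ifs <;> ring
      map_smul' := fun s v => by
        funext g
        simp only [Pi.smul_apply, smul_eq_mul, RingHom.id_apply, Function.comp_apply]
        split_ifs <;> ring }
  else 1

/-- The operator `Ψ(H_i)` on `V̄^⊗m`, for `0 ≤ i ≤ m-1`. -/
def RopN (r m : ℕ) (i : ℕ) : Module.End Kq (TP r m) :=
  if i = 0 then R0op r m else Rsw r m (i - 1)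
/-- `j ∈ 𝕀(2r+2)`, i.e. `η_j ∈ V`. -/
def innerI (r : ℕ) (j : Idx r) : Prop := j ≠ botI r ∧ j ≠ topI r

/-- `f` indexes a basis vector of `V^{⊗l} ⊗ η_{r+3/2}^{⊗(m-l)}`. -/
def goodF (r m : ℕ) (l : ℕ) (f : Fin m → Idx r) : Prop :=
  ∀ k : Fin m, ((k : ℕ) < l → innerI r (f k)) ∧ (l ≤ (k : ℕ) → f k = topI r)

/-- The subspace `V̄_{{1,…,l},∅} = V^{⊗l} ⊗ η_{r+3/2}^{⊗(m-l)}` of `V̄^⊗m`. -/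
def Vsub (r m : ℕ) (l : ℕ) : Submodule Kq (TP r m) :=
  Submodule.span Kq {v | ∃ f, goodF r m l f ∧ v = Mf f}

/-- The subspace `V̄_{I,J}` of `V̄^⊗m`. -/
def VIJ (r m : ℕ) (I J : Finset (Fin m)) : Submodule Kq (TP r m) :=
  Submodule.span Kq {v | ∃ f : Fin m → Idx r,
    (∀ k : Fin m, (k ∈ I → innerI r (f k)) ∧ (k ∈ J → f k = botI r) ∧
      (k ∉ I → k ∉ J → f k = topI r)) ∧ v = Mf f}

/-- The subspace `V̄_l = ⊕_{#I = l, J} V̄_{I,J}` of `V̄^⊗m`. -/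
def Vlevel (r m : ℕ) (l : ℕ) : Submodule Kq (TP r m) :=
  Submodule.span Kq {v | ∃ f : Fin m → Idx r,
    Nat.card {k : Fin m // innerI r (f k)} = l ∧ v = Mf f}

/-- The length (number of inversions) of a permutation of `{0, …, l-1}`. -/
def lenPerm {l : ℕ} (σ : Equiv.Perm (Fin l)) : ℕ :=
  (Finset.univ.filter (fun p : Fin l × Fin l => p.1 < p.2 ∧ σ p.2 < σ p.1)).card

/-- The simple transposition interchanging `p` and `p+1` (0-based) in `𝔖_l`;
this is the paper's `s_{p+1}`. -/
def adjSwap (l : ℕ) (p : ℕ) : Equiv.Perm (Fin l) :=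
  if h : p + 1 < l then Equiv.swap ⟨p, by omega⟩ ⟨p+1, h⟩ else 1

/-- The first descent of a permutation, if any. -/
def descentIdx {l : ℕ} (σ : Equiv.Perm (Fin l)) : Option ℕ :=
  (List.range l).find? (fun p =>
    if h : p + 1 < l then decide (σ ⟨p+1, h⟩ < σ ⟨p, by omega⟩) else false)

/-- Canonical reduced word construction (with fuel). -/
def permWordAux {l : ℕ} : ℕ → Equiv.Perm (Fin l) → List ℕ
  | 0, _ => []
  | (fuel+1), σ =>
    match descentIdx σ with
    | none => []
    | some p => permWordAux fuel (σ * adjSwap l p) ++ [p]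

/-- A canonical reduced word for `σ`: `σ = s_{p₁+1} ⋯ s_{p_k+1}` (paper indexing)
where `permWord σ = [p₁, …, p_k]`, and `k = ℓ(σ)`. -/
def permWord {l : ℕ} (σ : Equiv.Perm (Fin l)) : List ℕ := permWordAux (lenPerm σ) σ

/-- The operator `Ψ(H_σ)` on `V̄^⊗m` for a permutation `σ ∈ 𝔖_l` (`l ≤ m`), where
`H_σ = H_{i₁} ⋯ H_{i_k}` for a reduced expression `σ = s_{i₁} ⋯ s_{i_k}`; since `Ψ` is an
anti-homomorphism this is the product of the `Ψ(H_i)` in reversed order. -/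
def opPerm (r m : ℕ) {l : ℕ} (σ : Equiv.Perm (Fin l)) : Module.End Kq (TP r m) :=
  (((permWord σ).map (fun p => RopN r m (p+1))).reverse).prod

/-- `A` is a finite product of the operators `Ψ(H_i)^{±1}`, `0 ≤ i ≤ m-1`. -/
def IsRWord (r m : ℕ) (A : Module.End Kq (TP r m)) : Prop :=
  ∃ ws : List (Module.End Kq (TP r m)), A = ws.prod ∧
    ∀ u ∈ ws, ∃ i : ℕ, i < m ∧
      (u = RopN r m i ∨ (u * RopN r m i = 1 ∧ RopN r m i * u = 1))
/-- Generator `H_i` of the free algebra on `m` letters. -/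
def Hvar (m : ℕ) (i : Fin m) : FreeAlgebra Kq (Fin m) := FreeAlgebra.ι Kq i

/-- The defining relations of the Iwahori–Hecke algebra `H(B_m)` of type `B_m`. -/
inductive HBrel (m : ℕ) : FreeAlgebra Kq (Fin m) → FreeAlgebra Kq (Fin m) → Prop
  | quad (i : Fin m) :
      HBrel m ((Hvar m i - algebraMap Kq _ qv⁻¹) * (Hvar m i + algebraMap Kq _ qv)) 0
  | braid (i : ℕ) (h1 : 1 ≤ i) (h2 : i + 1 < m) :
      HBrel m (Hvar m ⟨i, by omega⟩ * Hvar m ⟨i+1, h2⟩ * Hvar m ⟨i, by omega⟩)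
              (Hvar m ⟨i+1, h2⟩ * Hvar m ⟨i, by omega⟩ * Hvar m ⟨i+1, h2⟩)
  | comm (i j : Fin m) (h : (i : ℕ) + 1 < (j : ℕ) ∨ (j : ℕ) + 1 < (i : ℕ)) :
      HBrel m (Hvar m i * Hvar m j) (Hvar m j * Hvar m i)
  | braid0 (h : 1 < m) :
      HBrel m (Hvar m ⟨0, by omega⟩ * Hvar m ⟨1, h⟩ * Hvar m ⟨0, by omega⟩ * Hvar m ⟨1, h⟩)
              (Hvar m ⟨1, h⟩ * Hvar m ⟨0, by omega⟩ * Hvar m ⟨1, h⟩ * Hvar m ⟨0, by omega⟩)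

/-- The Iwahori–Hecke algebra `H(B_m)` of type `B_m` over `ℚ(q)`. -/
abbrev HeckeB (m : ℕ) := RingQuot (HBrel m)

/-- The generator `H_i ∈ H(B_m)`. -/
def Hgen (m : ℕ) (i : Fin m) : HeckeB m := RingQuot.mkAlgHom Kq (HBrel m) (Hvar m i)

/-- The generator `H_j ∈ H(B_m)` with out-of-range indices sent to `1`. -/
def HgenN (m : ℕ) (j : ℕ) : HeckeB m := if h : j < m then Hgen m ⟨j, h⟩ else 1

/-- The element `H_w ∈ H(B_m)` for `w ∈ 𝔖_m ⊂ 𝒲(B_m)`, defined via a reduced expression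
for `w` (well defined by Matsumoto's theorem). -/
def HpermB (m : ℕ) (w : Equiv.Perm (Fin m)) : HeckeB m :=
  ((permWord w).map (fun p => HgenN m (p+1))).prod

/-- Generators of the duplex Hecke algebra: the `T_i` and the `x_σ^{(l)}`. -/
def DGen (m : ℕ) : Type := (Fin m) ⊕ (Σ l : Fin (m+1), Equiv.Perm (Fin (l : ℕ)))

/-- The generator `T_i` of the free algebra. -/
def Tvar (m : ℕ) (i : Fin m) : FreeAlgebra Kq (DGen m) := FreeAlgebra.ι Kq (Sum.inl i)

/-- The generator `x_σ^{(l)}` of the free algebra. -/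
def Xvar (m : ℕ) (l : Fin (m+1)) (σ : Equiv.Perm (Fin (l : ℕ))) : FreeAlgebra Kq (DGen m) :=
  FreeAlgebra.ι Kq (Sum.inr ⟨l, σ⟩)

/-- The defining relations of the duplex Hecke algebra `𝓗_m` of type `B`. -/
inductive DHrel (m : ℕ) : FreeAlgebra Kq (DGen m) → FreeAlgebra Kq (DGen m) → Prop
  | quadT (i : Fin m) :
      DHrel m ((Tvar m i + algebraMap Kq _ qv) * (Tvar m i - algebraMap Kq _ qv⁻¹)) 0
  | braidT (i : ℕ) (h1 : 1 ≤ i) (h2 : i + 1 < m) :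
      DHrel m (Tvar m ⟨i, by omega⟩ * Tvar m ⟨i+1, h2⟩ * Tvar m ⟨i, by omega⟩)
              (Tvar m ⟨i+1, h2⟩ * Tvar m ⟨i, by omega⟩ * Tvar m ⟨i+1, h2⟩)
  | commT (i j : Fin m) (h : (i : ℕ) + 1 < (j : ℕ) ∨ (j : ℕ) + 1 < (i : ℕ)) :
      DHrel m (Tvar m i * Tvar m j) (Tvar m j * Tvar m i)
  | braid0T (h : 1 < m) :
      DHrel m (Tvar m ⟨0, by omega⟩ * Tvar m ⟨1, h⟩ * Tvar m ⟨0, by omega⟩ * Tvar m ⟨1, h⟩)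
              (Tvar m ⟨1, h⟩ * Tvar m ⟨0, by omega⟩ * Tvar m ⟨1, h⟩ * Tvar m ⟨0, by omega⟩)
  | xRightUp (l : Fin (m+1)) (σ : Equiv.Perm (Fin (l : ℕ))) (p : ℕ) (hp : p + 1 < (l : ℕ))
      (hlen : lenPerm (σ * adjSwap (l : ℕ) p) = lenPerm σ + 1) :
      DHrel m (Xvar m l σ * Xvar m l (adjSwap (l : ℕ) p)) (Xvar m l (σ * adjSwap (l : ℕ) p))
  | xRightDown (l : Fin (m+1)) (σ : Equiv.Perm (Fin (l : ℕ))) (p : ℕ) (hp : p + 1 < (l : ℕ))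
      (hlen : lenPerm (σ * adjSwap (l : ℕ) p) + 1 = lenPerm σ) :
      DHrel m (Xvar m l σ * Xvar m l (adjSwap (l : ℕ) p))
              (Xvar m l (σ * adjSwap (l : ℕ) p) + algebraMap Kq _ (qv⁻¹ - qv) * Xvar m l σ)
  | xLeftUp (l : Fin (m+1)) (σ : Equiv.Perm (Fin (l : ℕ))) (p : ℕ) (hp : p + 1 < (l : ℕ))
      (hlen : lenPerm (adjSwap (l : ℕ) p * σ) = lenPerm σ + 1) :
      DHrel m (Xvar m l (adjSwap (l : ℕ) p) * Xvar m l σ) (Xvar m l (adjSwap (l : ℕ) p * σ))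
  | xLeftDown (l : Fin (m+1)) (σ : Equiv.Perm (Fin (l : ℕ))) (p : ℕ) (hp : p + 1 < (l : ℕ))
      (hlen : lenPerm (adjSwap (l : ℕ) p * σ) + 1 = lenPerm σ) :
      DHrel m (Xvar m l (adjSwap (l : ℕ) p) * Xvar m l σ)
              (Xvar m l (adjSwap (l : ℕ) p * σ) + algebraMap Kq _ (qv⁻¹ - qv) * Xvar m l σ)
  | xOrtho (l k : Fin (m+1)) (h : l ≠ k) (σ : Equiv.Perm (Fin (l : ℕ)))
      (γ : Equiv.Perm (Fin (k : ℕ))) :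
      DHrel m (Xvar m l σ * Xvar m k γ) 0
  | TxMid (i : ℕ) (l : Fin (m+1)) (h0 : 0 < i) (hil : i < (l : ℕ))
      (σ : Equiv.Perm (Fin (l : ℕ))) :
      DHrel m (Tvar m ⟨i, by have := l.2; omega⟩ * Xvar m l σ)
              (Xvar m l (adjSwap (l : ℕ) (i-1)) * Xvar m l σ)
  | xTMid (i : ℕ) (l : Fin (m+1)) (h0 : 0 < i) (hil : i < (l : ℕ))
      (σ : Equiv.Perm (Fin (l : ℕ))) :
      DHrel m (Xvar m l σ * Tvar m ⟨i, by have := l.2; omega⟩)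
              (Xvar m l σ * Xvar m l (adjSwap (l : ℕ) (i-1)))
  | TxBig (i : Fin m) (l : Fin (m+1)) (h : (l : ℕ) < (i : ℕ)) (σ : Equiv.Perm (Fin (l : ℕ))) :
      DHrel m (Tvar m i * Xvar m l σ) (algebraMap Kq _ qv⁻¹ * Xvar m l σ)
  | xTBig (i : Fin m) (l : Fin (m+1)) (h : (l : ℕ) < (i : ℕ)) (σ : Equiv.Perm (Fin (l : ℕ))) :
      DHrel m (Xvar m l σ * Tvar m i) (algebraMap Kq _ qv⁻¹ * Xvar m l σ)

/-- The duplex Hecke algebra `𝓗_m` of type `B` over `ℚ(q)`. -/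
abbrev DuplexH (m : ℕ) := RingQuot (DHrel m)

/-- The generator `T_i ∈ 𝓗_m`. -/
def Tg (m : ℕ) (i : Fin m) : DuplexH m := RingQuot.mkAlgHom Kq (DHrel m) (Tvar m i)

/-- The generator `x_σ^{(l)} ∈ 𝓗_m`. -/
def Xg (m : ℕ) (l : Fin (m+1)) (σ : Equiv.Perm (Fin (l : ℕ))) : DuplexH m :=
  RingQuot.mkAlgHom Kq (DHrel m) (Xvar m l σ)

/-- Generating set of the image `Φ(U_q^ı)` of the full ıquantum group:
`ℬ_0`, all `ℬ_i` with `0 ≠ i`, `-r-1 ≤ i ≤ r+1`, and all `𝕜_i^{±1}`. -/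
def UiSet (r m : ℕ) : Set (Module.End Kq (TP r m)) :=
  {opB0 r m} ∪ (opB r m '' {a | a ≠ midI r}) ∪
    Set.range (opkk r m) ∪ Set.range (opkkInv r m)

/-- `Φ(U_q^ı)`, the image of the ıquantum group `U_q^ı(sl_{2r+4})` in `End(V̄^⊗m)`. -/
def PhiU (r m : ℕ) : Subalgebra Kq (Module.End Kq (TP r m)) :=
  Algebra.adjoin Kq (UiSet r m)

/-- `Ψ(H(B_m))`, the unital subalgebra of `End_K(V̄^⊗m)` generated by the operators
`Ψ(H_0), …, Ψ(H_{m-1})`. -/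
def PsiHB (r m : ℕ) : Subalgebra Kq (Module.End Kq (TP r m)) :=
  Algebra.adjoin Kq {A | ∃ i : ℕ, i < m ∧ A = RopN r m i}

/-! ### Specialisation at `q = 1` -/

/-- `x ∈ ℚ(q)` is regular at `q = 1` and takes the value `c` there. -/
def HasVal (x : Kq) (c : ℚ) : Prop :=
  ∃ p s : Polynomial ℚ, s.eval 1 ≠ 0 ∧
    x * algebraMap (Polynomial ℚ) Kq s = algebraMap (Polynomial ℚ) Kq p ∧
    p.eval 1 = c * s.eval 1

theorem HasVal.add {x y : Kq} {c d : ℚ} (hx : HasVal x c) (hy : HasVal y d) :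
    HasVal (x + y) (c + d) := by
  obtain ⟨p, s, hs, h1, h2⟩ := hx
  obtain ⟨p', s', hs', h1', h2'⟩ := hy
  refine ⟨p * s' + p' * s, s * s', by simp [hs, hs'], ?_, ?_⟩
  · rw [map_mul, map_add, map_mul, map_mul, ← h1, ← h1']; ring
  · simp only [Polynomial.eval_add, Polynomial.eval_mul, h2, h2']; ring

theorem HasVal.mul {x y : Kq} {c d : ℚ} (hx : HasVal x c) (hy : HasVal y d) :
    HasVal (x * y) (c * d) := by
  obtain ⟨p, s, hs, h1, h2⟩ := hx
  obtain ⟨p', s', hs', h1', h2'⟩ := hy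
  refine ⟨p * p', s * s', by simp [hs, hs'], ?_, ?_⟩
  · rw [map_mul, map_mul, ← h1, ← h1']; ring
  · simp only [Polynomial.eval_mul, h2, h2']; ring

theorem hasVal_rat (c : ℚ) : HasVal (algebraMap ℚ Kq c) c :=
  ⟨Polynomial.C c, 1, by simp, by simp [← RatFunc.algebraMap_eq_C], by simp⟩

theorem hasVal_zero : HasVal 0 0 := by simpa using hasVal_rat 0

theorem hasVal_one : HasVal 1 1 := by simpa using hasVal_rat 1

theorem qv_ne_zero : qv ≠ 0 := RatFunc.X_ne_zero

theorem hasVal_q : HasVal qv 1 := ⟨Polynomial.X, 1, by simp, by simp [qv], by simp⟩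

theorem hasVal_qinv : HasVal qv⁻¹ 1 :=
  ⟨1, Polynomial.X, by simp, by
    have := qv_ne_zero
    rw [RatFunc.algebraMap_X, map_one]; exact inv_mul_cancel₀ this, by simp⟩

theorem hasVal_qdiff : HasVal (qv⁻¹ - qv) 0 := by
  have h := hasVal_qinv.add ((hasVal_rat (-1)).mul hasVal_q)
  have e : qv⁻¹ - qv = qv⁻¹ + algebraMap ℚ Kq (-1) * qv := by
    rw [map_neg, map_one]; ring
  rw [e]; simpa using h

theorem HasVal.unique {x : Kq} {c d : ℚ} (hx : HasVal x c) (hy : HasVal x d) : c = d := by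
  obtain ⟨p, s, hs, h1, h2⟩ := hx
  obtain ⟨p', s', hs', h1', h2'⟩ := hy
  have h : p * s' = p' * s := by
    apply RatFunc.algebraMap_injective ℚ
    rw [map_mul, map_mul, ← h1, ← h1']; ring
  have h3 := congrArg (Polynomial.eval 1) h
  simp only [Polynomial.eval_mul, h2, h2'] at h3
  have h4 : (c - d) * (s.eval 1 * s'.eval 1) = 0 := by linear_combination h3
  rcases mul_eq_zero.1 h4 with h5 | h5
  · linarith
  · exact absurd h5 (mul_ne_zero hs hs')

theorem HasVal.sum {ι : Type*} (s : Finset ι) {x : ι → Kq} {c : ι → ℚ}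
    (h : ∀ i ∈ s, HasVal (x i) (c i)) : HasVal (∑ i ∈ s, x i) (∑ i ∈ s, c i) := by
  classical
  induction s using Finset.induction_on with
  | empty => simpa using hasVal_zero
  | insert a s ha ih =>
    rw [Finset.sum_insert ha, Finset.sum_insert ha]
    exact (h a (by simp)).add (ih fun i hi => h i (by simp [hi]))

theorem HasVal.prod {ι : Type*} (s : Finset ι) {x : ι → Kq} {c : ι → ℚ}
    (h : ∀ i ∈ s, HasVal (x i) (c i)) : HasVal (∏ i ∈ s, x i) (∏ i ∈ s, c i) := by
  classical
  induction s using Finset.induction_on with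
  | empty => simpa using hasVal_one
  | insert a s ha ih =>
    rw [Finset.prod_insert ha, Finset.prod_insert ha]
    exact (h a (by simp)).mul (ih fun i hi => h i (by simp [hi]))

/-- Divide a family of polynomials by `q - 1` until some member does not vanish at `q = 1`; the
degree of a fixed nonzero member `p i₀` bounds the number of divisions. -/
theorem exists_scale_poly {ι : Type*} (i₀ : ι) (n : ℕ) :
    ∀ p : ι → Polynomial ℚ, p i₀ ≠ 0 → (p i₀).natDegree ≤ n →
    ∃ t : Kq, t ≠ 0 ∧ ∃ c : ι → ℚ,
      (∀ i, HasVal (t * algebraMap (Polynomial ℚ) Kq (p i)) (c i)) ∧ ∃ i, c i ≠ 0 := by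
  induction n with
  | zero =>
    intro p h0 hd
    refine ⟨1, one_ne_zero, fun i => (p i).eval 1, fun i => ⟨p i, 1, by simp, by simp, by simp⟩,
      i₀, ?_⟩
    rw [Polynomial.eq_C_of_natDegree_le_zero hd] at h0
    change (p i₀).eval 1 ≠ 0
    rw [Polynomial.eq_C_of_natDegree_le_zero hd]
    simpa using h0
  | succ n ih =>
    intro p h0 hd
    by_cases hall : ∃ i, (p i).eval 1 ≠ 0
    · exact ⟨1, one_ne_zero, fun i => (p i).eval 1,
        fun i => ⟨p i, 1, by simp, by simp, by simp⟩, hall⟩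
    · push Not at hall
      have hdiv : ∀ i, ∃ p', p i = (Polynomial.X - Polynomial.C 1) * p' := fun i =>
        Polynomial.dvd_iff_isRoot.2 (hall i)
      choose p' hp' using hdiv
      have hne : (Polynomial.X - Polynomial.C (1:ℚ)) ≠ 0 := Polynomial.X_sub_C_ne_zero 1
      have h0' : p' i₀ ≠ 0 := by
        intro h; apply h0; rw [hp', h, mul_zero]
      have hd' : (p' i₀).natDegree ≤ n := by
        have := Polynomial.natDegree_mul hne h0'
        rw [← hp', Polynomial.natDegree_X_sub_C] at this
        omega
      obtain ⟨t, ht, c, hc, hi⟩ := ih p' h0' hd'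
      have hne' : algebraMap (Polynomial ℚ) Kq (Polynomial.X - Polynomial.C (1:ℚ)) ≠ 0 := by
        simpa only [ne_eq, FaithfulSMul.algebraMap_eq_zero_iff] using hne
      refine ⟨t * (algebraMap (Polynomial ℚ) Kq (Polynomial.X - Polynomial.C (1:ℚ)))⁻¹,
        mul_ne_zero ht (inv_ne_zero hne'), c, fun i => ?_, hi⟩
      rw [hp' i, map_mul, mul_assoc, inv_mul_cancel_left₀ hne']
      exact hc i

/-- A nonzero finite family in `ℚ(q)` can be rescaled so that it is regular at `q = 1` with a
nonzero value there: clear denominators, then divide by a power of `q - 1`. -/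
theorem exists_scale {ι : Type*} [Fintype ι] (x : ι → Kq) (hx : x ≠ 0) :
    ∃ t : Kq, t ≠ 0 ∧ ∃ c : ι → ℚ, (∀ i, HasVal (t * x i) (c i)) ∧ ∃ i, c i ≠ 0 := by
  classical
  obtain ⟨i₀, hi₀⟩ := Function.ne_iff.1 hx
  obtain ⟨d, hd⟩ := IsLocalization.exist_integer_multiples_of_finite
    (nonZeroDivisors (Polynomial ℚ)) x
  choose p hp using hd
  have hd0 : algebraMap (Polynomial ℚ) Kq d ≠ 0 := by
    simpa only [ne_eq, FaithfulSMul.algebraMap_eq_zero_iff] using nonZeroDivisors.coe_ne_zero d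
  have hp' : ∀ i, algebraMap (Polynomial ℚ) Kq (p i) = algebraMap (Polynomial ℚ) Kq d * x i := by
    intro i; rw [hp, Algebra.smul_def]
  have h0 : p i₀ ≠ 0 := by
    intro h
    have := hp' i₀
    rw [h, map_zero] at this
    exact mul_ne_zero hd0 hi₀ this.symm
  obtain ⟨t, ht, c, hc, hi⟩ := exists_scale_poly i₀ _ p h0 le_rfl
  refine ⟨t * algebraMap (Polynomial ℚ) Kq d, mul_ne_zero ht hd0, c, fun i => ?_, hi⟩
  rw [mul_assoc, ← hp']
  exact hc i

/-- `ℚ(q)` is formally real: specialise a primitive rescaling to `ℚ`. -/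
theorem sum_sq_eq_zero {ι : Type*} [Fintype ι] (x : ι → Kq) (h : ∑ i, x i * x i = 0) : x = 0 := by
  by_contra hx
  obtain ⟨t, -, c, hc, i, hi⟩ := exists_scale x hx
  have h1 : HasVal (∑ i, (t * x i) * (t * x i)) (∑ i, c i * c i) :=
    HasVal.sum _ fun i _ => (hc i).mul (hc i)
  have h2 : ∑ i, (t * x i) * (t * x i) = 0 := by
    have : ∑ i, (t * x i) * (t * x i) = (t * t) * ∑ i, x i * x i := by
      rw [Finset.mul_sum]; exact Finset.sum_congr rfl fun i _ => by ring
    rw [this, h, mul_zero]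
  rw [h2] at h1
  have h3 := h1.unique hasVal_zero
  rw [Finset.sum_eq_zero_iff_of_nonneg fun i _ => mul_self_nonneg _] at h3
  exact hi (mul_self_eq_zero.1 (h3 i (Finset.mem_univ i)))

/-! ### Double centralizers of transpose-closed matrix algebras -/

section DoubleCentralizer

variable {n : Type*} [Fintype n] [DecidableEq n]

/-- The bilinear form `⟨X, Y⟩ = ∑ X_{ij} Y_{ij}` on matrices. -/
def frob (K n : Type*) [Field K] [Fintype n] [DecidableEq n] :
    LinearMap.BilinForm K (Matrix n n K) :=
  LinearMap.mk₂ K (fun X Y => (X.transpose * Y).trace)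
    (fun X X' Y => by simp [Matrix.add_mul])
    (fun c X Y => by simp)
    (fun X Y Y' => by simp [Matrix.mul_add])
    (fun c X Y => by simp)

theorem frob_apply {K : Type*} [Field K] (X Y : Matrix n n K) :
    frob K n X Y = (X.transpose * Y).trace := rfl

theorem frob_eq_sum {K : Type*} [Field K] (X Y : Matrix n n K) :
    frob K n X Y = ∑ p : n × n, X p.1 p.2 * Y p.1 p.2 := by
  rw [frob_apply, Fintype.sum_prod_type_right]
  simp [Matrix.trace, Matrix.mul_apply]

theorem frob_isRefl {K : Type*} [Field K] : (frob K n).IsRefl := by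
  intro X Y h
  rw [frob_eq_sum] at h ⊢
  rw [← h]
  exact Finset.sum_congr rfl fun p _ => mul_comm _ _

/-- Over `ℚ(q)` the form `frob` is anisotropic, so every subspace has an orthogonal complement. -/
theorem frob_isCompl (W : Submodule Kq (Matrix n n Kq)) :
    IsCompl W ((frob Kq n).orthogonal W) := by
  refine (LinearMap.BilinForm.isCompl_orthogonal_iff_disjoint frob_isRefl).2 ?_
  rw [Submodule.disjoint_def]
  intro Y hY hY'
  have h := (LinearMap.BilinForm.mem_orthogonal_iff.1 hY') Y hY
  rw [frob_eq_sum] at h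
  have h2 := sum_sq_eq_zero (fun p : n × n => Y p.1 p.2) h
  ext i j
  exact congrFun h2 (i, j)

theorem exists_orth_decomp (W : Submodule Kq (Matrix n n Kq)) (Y : Matrix n n Kq) :
    ∃ u ∈ W, ∃ v ∈ (frob Kq n).orthogonal W, u + v = Y := by
  have : Y ∈ W ⊔ (frob Kq n).orthogonal W := by rw [(frob_isCompl W).sup_eq_top]; trivial
  exact Submodule.mem_sup.1 this

/-- The orthogonal projection `P` onto `S` is left `S`-linear, so its "blocks" (one for each pair
of columns) lie in the commutant of `S`; hence an element `X` of the bicommutant satisfies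
`P (X * Y) = X * P Y`, and `Y = 1` gives `P X = X`. -/
theorem mem_of_bicommutant (S : Subalgebra Kq (Matrix n n Kq))
    (hS : ∀ b ∈ S, b.transpose ∈ S) (X : Matrix n n Kq)
    (hX : ∀ Y : Matrix n n Kq, (∀ b ∈ S, Y * b = b * Y) → X * Y = Y * X) : X ∈ S := by
  set W := Subalgebra.toSubmodule S with hW
  have hc := frob_isCompl W
  have hdec := exists_orth_decomp W
  set P := W.projection _ hc with hP
  have hPl : ∀ u ∈ W, P u = u := fun u hu => Submodule.projection_apply_of_mem_left hc hu
  have hPr : ∀ u ∈ (frob Kq n).orthogonal W, P u = 0 := fun u hu =>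
    (Submodule.projection_apply_eq_zero_iff hc).2 hu
  have hPW : ∀ u, P u ∈ W := fun u => Submodule.projection_apply_mem hc u
  have hlin : ∀ b ∈ S, ∀ Y, P (b * Y) = b * P Y := by
    intro b hb Y
    obtain ⟨u, hu, v, hv, rfl⟩ := hdec Y
    have h1 : b * u ∈ W := S.mul_mem hb hu
    have h2 : b * v ∈ (frob Kq n).orthogonal W := by
      rw [LinearMap.BilinForm.mem_orthogonal_iff]
      intro w hw
      have h3 := (LinearMap.BilinForm.mem_orthogonal_iff.1 hv) (b.transpose * w)
        (S.mul_mem (hS b hb) hw)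
      rw [frob_apply] at h3 ⊢
      rw [Matrix.transpose_mul, Matrix.transpose_transpose, Matrix.mul_assoc] at h3
      exact h3
    rw [mul_add, map_add, map_add, hPl u hu, hPr v hv, hPl _ h1, hPr _ h2, add_zero, add_zero]
  -- `blk k l` is the block of `P` sending column `k` of the input to column `l` of the output
  let blk : n → n → Matrix n n Kq := fun k l i j => P (Matrix.single j k 1) i l
  have hsing : ∀ (b : Matrix n n Kq) (j k : n),
      b * Matrix.single j k 1 = ∑ s, b s j • Matrix.single s k 1 := by
    intro b j k
    ext x y
    by_cases h : k = y <;> simp [Matrix.mul_apply, Matrix.single_apply, Matrix.sum_apply, h]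
  have hexp : ∀ (b : Matrix n n Kq) (j k i l : n),
      P (b * Matrix.single j k 1) i l = (blk k l * b) i j := by
    intro b j k i l
    rw [hsing, map_sum, Matrix.sum_apply, Matrix.mul_apply]
    refine Finset.sum_congr rfl fun s _ => ?_
    rw [map_smul, Matrix.smul_apply, smul_eq_mul, mul_comm]
  have hexp' : ∀ (b : Matrix n n Kq) (j k i l : n),
      (b * P (Matrix.single j k 1)) i l = (b * blk k l) i j := by
    intro b j k i l
    rw [Matrix.mul_apply, Matrix.mul_apply]
  have hcomm : ∀ k l, ∀ b ∈ S, blk k l * b = b * blk k l := by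
    intro k l b hb
    ext i j
    rw [← hexp, ← hexp', hlin b hb]
  have hXs : ∀ j k, P (X * Matrix.single j k 1) = X * P (Matrix.single j k 1) := by
    intro j k
    ext i l
    rw [hexp, hexp', hX (blk k l) (hcomm k l)]
  have hone : (1 : Matrix n n Kq) = ∑ j, Matrix.single j j 1 := by
    ext x y
    simp only [Matrix.sum_apply, Matrix.single_apply, Matrix.one_apply, ite_and]
    rw [Finset.sum_ite_eq' Finset.univ x, if_pos (Finset.mem_univ x)]
  have hfin : P X = X * P 1 := by
    conv_lhs => rw [← mul_one X, hone, Finset.mul_sum, map_sum]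
    rw [hone, map_sum, Finset.mul_sum]
    exact Finset.sum_congr rfl fun j _ => hXs j j
  rw [hPl 1 S.one_mem, mul_one] at hfin
  have := hPW X
  rw [hfin] at this
  exact this

end DoubleCentralizer

/-! ### Tensor products of matrices -/

section Tensor

set_option linter.unusedSectionVars false

variable {R I : Type*} [CommRing R] [Fintype I] [DecidableEq I] {m : ℕ}

/-- The tensor product `c 0 ⊗ ⋯ ⊗ c (m-1)` of square matrices. -/
def ten (c : Fin m → Matrix I I R) : Matrix (Fin m → I) (Fin m → I) R :=
  fun g f => ∏ k, c k (g k) (f k)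

theorem ten_mul (c d : Fin m → Matrix I I R) : ten c * ten d = ten (c * d) := by
  ext g f
  simp only [ten, Matrix.mul_apply, Pi.mul_apply]
  rw [Finset.prod_univ_sum]
  simp only [Fintype.piFinset_univ, Finset.prod_mul_distrib]

theorem ten_one : ten (fun _ => (1 : Matrix I I R)) = (1 : Matrix (Fin m → I) (Fin m → I) R) := by
  ext g f
  simp only [ten, Matrix.one_apply]
  rw [Finset.prod_ite_zero]
  simp [funext_iff]

theorem ten_update (c : Fin m → Matrix I I R) (l : Fin m) (x : Matrix I I R) (g f : Fin m → I) :
    ten (Function.update c l x) g f = x (g l) (f l) * ∏ k ∈ Finset.univ.erase l, c k (g k) (f k) := by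
  rw [ten, ← Finset.mul_prod_erase _ _ (Finset.mem_univ l), Function.update_self]
  congr 1
  refine Finset.prod_congr rfl fun k hk => ?_
  rw [Function.update_of_ne (Finset.ne_of_mem_erase hk)]

theorem ten_update_add (c : Fin m → Matrix I I R) (l : Fin m) (x y : Matrix I I R) :
    ten (Function.update c l (x + y)) = ten (Function.update c l x) + ten (Function.update c l y) := by
  ext g f
  simp only [Matrix.add_apply, ten_update, add_mul]

theorem ten_update_smul (c : Fin m → Matrix I I R) (l : Fin m) (a : R) (x : Matrix I I R) :
    ten (Function.update c l (a • x)) = a • ten (Function.update c l x) := by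
  ext g f
  simp only [Matrix.smul_apply, ten_update, smul_eq_mul, mul_assoc]

/-- The derivation-like extension `∑ₗ 1 ⊗ ⋯ ⊗ x ⊗ ⋯ ⊗ 1` of `x` to the tensor power. -/
def prim (m : ℕ) : Matrix I I R →ₗ[R] Matrix (Fin m → I) (Fin m → I) R where
  toFun x := ∑ l : Fin m, ten (Pi.mulSingle l x)
  map_add' x y := by
    rw [← Finset.sum_add_distrib]
    exact Finset.sum_congr rfl fun l _ => ten_update_add _ l x y
  map_smul' a x := by
    rw [RingHom.id_apply, Finset.smul_sum]
    exact Finset.sum_congr rfl fun l _ => ten_update_smul _ l a x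

theorem prim_apply (x : Matrix I I R) :
    prim m x = ∑ l : Fin m, ten (Pi.mulSingle l x) := rfl

theorem prim_one : prim m (1 : Matrix I I R) = (m : R) • 1 := by
  rw [prim_apply]
  simp only [Pi.mulSingle_one]
  have : ten (1 : Fin m → Matrix I I R) = 1 := ten_one
  rw [this]
  simp [Finset.sum_const, ← Nat.cast_smul_eq_nsmul R]

theorem prim_commutator (x y : Matrix I I R) :
    prim m (x * y - y * x) = prim m x * prim m y - prim m y * prim m x := by
  rw [map_sub, prim_apply, prim_apply, prim_apply, prim_apply, Finset.sum_mul_sum,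
    Finset.sum_mul_sum, Finset.sum_comm (s := Finset.univ) (t := Finset.univ)
      (f := fun i j => ten (Pi.mulSingle i y) * ten (Pi.mulSingle j x)),
    ← Finset.sum_sub_distrib, ← Finset.sum_sub_distrib]
  refine Finset.sum_congr rfl fun l _ => ?_
  rw [← Finset.sum_sub_distrib, Finset.sum_eq_single l]
  · rw [ten_mul, ten_mul, Pi.mulSingle_mul, Pi.mulSingle_mul]
  · intro k _ hk
    rw [ten_mul, ten_mul, (Pi.mulSingle_commute (f := fun _ => Matrix I I R) hk.symm x y).eq, sub_self]
  · intro h; exact absurd (Finset.mem_univ l) h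

/-- The symmetrisation of a pure tensor. -/
def symT (c : Fin m → Matrix I I R) : Matrix (Fin m → I) (Fin m → I) R :=
  ∑ σ : Equiv.Perm (Fin m), ten (c ∘ σ)

theorem prim_mul_symT (y : Matrix I I R) (c : Fin m → Matrix I I R) :
    prim m y * symT c = ∑ k, symT (Function.update c k (y * c k)) := by
  simp only [symT]
  rw [Finset.sum_comm, Finset.mul_sum]
  refine Finset.sum_congr rfl fun σ _ => ?_
  rw [← Equiv.sum_comp σ, prim_apply, Finset.sum_mul]
  refine Finset.sum_congr rfl fun l _ => ?_
  rw [ten_mul]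
  congr 1
  funext k
  by_cases h : k = l
  · subst h; simp
  · simp [h, Function.update_of_ne]

theorem symT_comp (c : Fin m → Matrix I I R) (τ : Equiv.Perm (Fin m)) :
    symT (c ∘ τ) = symT c := by
  simp only [symT]
  exact Equiv.sum_comp (Equiv.mulLeft τ) (fun σ => ten (c ∘ σ))

end Tensor

/-- Symmetrised pure tensors with factors in a subalgebra `A` are polynomials in the `prim y`,
`y ∈ A`. The induction is on the number of factors different from `1`: multiplying by `prim y`
either turns a factor `1` into `y` (all such terms agree), or modifies another factor. -/
theorem symT_mem {I : Type*} [Fintype I] [DecidableEq I] {m : ℕ}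
    (A : Subalgebra ℚ (Matrix I I ℚ)) (S : Subalgebra ℚ (Matrix (Fin m → I) (Fin m → I) ℚ))
    (hA : ∀ x ∈ A, prim m x ∈ S) (n : ℕ) :
    ∀ c : Fin m → Matrix I I ℚ, (∀ k, c k ∈ A) →
      (Finset.univ.filter fun k => c k ≠ 1).card ≤ n → symT c ∈ S := by
  induction n with
  | zero =>
    intro c _ hn
    have hc : ∀ k, c k = 1 := by
      intro k
      by_contra hk
      have : k ∈ Finset.univ.filter fun k => c k ≠ 1 := by simp [hk]
      rw [Finset.card_eq_zero.1 (Nat.le_zero.1 hn)] at this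
      simp at this
    have hc' : c = fun _ => 1 := funext hc
    subst hc'
    refine Subalgebra.sum_mem _ fun σ _ => ?_
    have : ten ((fun _ => 1 : Fin m → Matrix I I ℚ) ∘ σ) = 1 := ten_one
    rw [this]
    exact S.one_mem
  | succ n ih =>
    intro c hc hn
    by_cases hall : ∀ k, c k = 1
    · refine ih c hc ?_
      rw [Finset.filter_false_of_mem]
      · simp
      · intro k _; simp [hall k]
    push Not at hall
    obtain ⟨k₀, hk₀⟩ := hall
    set c' := Function.update c k₀ 1 with hc'
    have hc'A : ∀ k, c' k ∈ A := by
      intro k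
      by_cases h : k = k₀
      · subst h; simp [hc', A.one_mem]
      · simp [hc', h, hc k]
    have hset : (Finset.univ.filter fun k => c' k ≠ 1) =
        (Finset.univ.filter fun k => c k ≠ 1).erase k₀ := by
      ext k
      by_cases h : k = k₀
      · subst h; simp [hc']
      · simp [hc', h]
    have hcard : (Finset.univ.filter fun k => c' k ≠ 1).card ≤ n := by
      rw [hset, Finset.card_erase_of_mem (by simp [hk₀])]; omega
    have hprod : prim m (c k₀) * symT c' ∈ S :=
      S.mul_mem (hA _ (hc k₀)) (ih c' hc'A hcard)
    rw [prim_mul_symT, ← Finset.sum_filter_add_sum_filter_not Finset.univ (fun k => c' k = 1)]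
      at hprod
    have h2 : ∑ k ∈ Finset.univ.filter (fun k => ¬ c' k = 1),
        symT (Function.update c' k (c k₀ * c' k)) ∈ S := by
      refine Subalgebra.sum_mem _ fun k hk => ?_
      refine ih _ ?_ (le_trans (Finset.card_le_card ?_) hcard)
      · intro l
        by_cases h : l = k
        · subst h; simpa using A.mul_mem (hc k₀) (hc'A l)
        · simpa [h] using hc'A l
      · intro l hl
        by_cases h : l = k
        · subst h; simpa using hk
        · simpa [h] using hl
    have h1 : ∑ k ∈ Finset.univ.filter (fun k => c' k = 1),
        symT (Function.update c' k (c k₀ * c' k)) =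
        ((Finset.univ.filter (fun k => c' k = 1)).card : ℚ) • symT c := by
      rw [Finset.sum_congr rfl (g := fun _ => symT c), Finset.sum_const, Nat.cast_smul_eq_nsmul]
      intro k hk
      have hk1 : c' k = 1 := by simpa using hk
      rw [hk1, mul_one, ← symT_comp c (Equiv.swap k₀ k)]
      congr 1
      funext l
      by_cases h : l = k
      · subst h; simp
      · rw [Function.update_of_ne h, Function.comp_apply]
        by_cases h' : l = k₀
        · subst h'
          rw [Equiv.swap_apply_left]
          have : c' l = 1 := by simp [hc']
          rw [this, ← hk1, hc', Function.update_of_ne (Ne.symm h)]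
        · rw [Equiv.swap_apply_of_ne_of_ne h' h, hc', Function.update_of_ne h']
    have h3 : ((Finset.univ.filter (fun k => c' k = 1)).card : ℚ) • symT c ∈ S := by
      rw [← h1]
      have := S.sub_mem hprod h2
      rwa [add_sub_cancel_right] at this
    have h4 : ((Finset.univ.filter (fun k => c' k = 1)).card : ℚ) ≠ 0 := by
      rw [Nat.cast_ne_zero, ← Nat.pos_iff_ne_zero, Finset.card_pos]
      exact ⟨k₀, by simp [hc']⟩
    have := S.smul_mem h3 ((Finset.univ.filter (fun k => c' k = 1)).card : ℚ)⁻¹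
    rwa [smul_smul, inv_mul_cancel₀ h4, one_smul] at this

/-! ### The centralizer of the Weyl group of type `B` over `ℚ` -/

section Classical

variable {N m : ℕ}

/-- The matrix `E_{ij} + E_{-i,-j}`, where `-` is the reversal of the index set. -/
def Er (i j : Fin N) : Matrix (Fin N) (Fin N) ℚ :=
  Matrix.single i j 1 + Matrix.single i.rev j.rev 1

theorem Er_rev (i j : Fin N) : Er i.rev j.rev = Er i j := by
  simp [Er, add_comm]

theorem Er_mul (i j k l : Fin N) :
    Er i j * Er k l = (if j = k then Er i l else 0) + (if j = k.rev then Er i l.rev else 0) := by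
  have e1 : j.rev = k ↔ j = k.rev := by
    constructor
    · rintro rfl; simp
    · rintro rfl; simp
  have e2 : ∀ a b c d : Fin N, Matrix.single a b (1:ℚ) * Matrix.single c d 1 =
      if b = c then Matrix.single a d 1 else 0 := by
    intro a b c d
    split_ifs with h
    · subst h; simp
    · exact Matrix.single_mul_single_of_ne _ _ _ _ h _
  simp only [Er, mul_add, add_mul, e2, Fin.rev_inj, Fin.rev_rev, e1]
  split_ifs <;> abel

/-- The algebra of matrices commuting with the reversal of the index set. -/
def revAlg (N : ℕ) : Subalgebra ℚ (Matrix (Fin N) (Fin N) ℚ) where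
  carrier := {x | ∀ i j, x i.rev j.rev = x i j}
  mul_mem' := by
    intro x y hx hy i j
    simp only [Matrix.mul_apply]
    rw [← Equiv.sum_comp Fin.revPerm]
    exact Finset.sum_congr rfl fun k _ => by rw [Fin.revPerm_apply, hx, hy]
  add_mem' := by
    intro x y hx hy i j
    simp only [Matrix.add_apply, hx i j, hy i j]
  algebraMap_mem' := by
    intro a i j
    simp [Matrix.algebraMap_matrix_apply]

theorem Er_mem_revAlg (i j : Fin N) : Er i j ∈ revAlg N := by
  intro a b
  simp only [Er, Matrix.add_apply, Matrix.single_apply, Fin.rev_inj]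
  have e : ∀ x y : Fin N, x = y.rev ↔ x.rev = y := by
    intro x y
    constructor
    · rintro rfl; simp
    · rintro rfl; simp
  rw [add_comm]
  simp only [e]

/-- An element of `revAlg` is a combination of the `Er i j`. -/
theorem revAlg_eq_sum (x : Matrix (Fin N) (Fin N) ℚ) (hx : x ∈ revAlg N) :
    x = (1/2 : ℚ) • ∑ i, ∑ j, x i j • Er i j := by
  have h1 : ∑ i, ∑ j, x i j • Matrix.single i j (1:ℚ) = x := by
    conv_rhs => rw [Matrix.matrix_eq_sum_single x]
    simp
  have h2 : ∑ i, ∑ j, x i j • Matrix.single (Fin.rev i) (Fin.rev j) (1:ℚ) = x := by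
    conv_rhs => rw [← h1]
    rw [← Equiv.sum_comp Fin.revPerm]
    refine Finset.sum_congr rfl fun i _ => ?_
    rw [← Equiv.sum_comp Fin.revPerm]
    refine Finset.sum_congr rfl fun j _ => ?_
    simp [hx i j]
  simp only [Er, smul_add, Finset.sum_add_distrib, h1, h2]
  rw [← add_smul]; norm_num

/-- If `prim (E_{i,i+1} + E_{-i,-(i+1)})` lies in the algebra `S` for every `i`, then so does
`prim x` for every `x` commuting with the reversal: iterated commutators of these elements,
together with `1`, span `revAlg`. -/
theorem prim_mem_of_simple {r : ℕ}
    (S : Subalgebra ℚ (Matrix (Fin m → Idx r) (Fin m → Idx r) ℚ))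
    (hS : ∀ i j : Idx r, (i : ℕ) + 1 = j → prim m (Er i j) ∈ S) :
    ∀ x ∈ revAlg (2*r+4), prim m x ∈ S := by
  set T : Submodule ℚ (Matrix (Idx r) (Idx r) ℚ) :=
    (Subalgebra.toSubmodule S).comap (prim m) with hT
  have hTm : ∀ x, x ∈ T ↔ prim m x ∈ S := fun x => Iff.rfl
  have hcomm : ∀ x ∈ T, ∀ y ∈ T, x * y - y * x ∈ T := by
    intro x hx y hy
    rw [hTm] at hx hy ⊢
    rw [prim_commutator]
    exact S.sub_mem (S.mul_mem hx hy) (S.mul_mem hy hx)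
  have hone : (1 : Matrix (Idx r) (Idx r) ℚ) ∈ T := by
    rw [hTm, prim_one]; exact S.smul_mem S.one_mem _
  have hup : ∀ i j : Idx r, (i : ℕ) + 1 = j → Er i j ∈ T := hS
  have hdown : ∀ i j : Idx r, (i : ℕ) + 1 = j → Er j i ∈ T := by
    intro i j h
    rw [← Er_rev]
    apply hup
    simp only [Fin.val_rev]
    have := i.2; have := j.2
    omega
  have hrevne : ∀ i : Idx r, i ≠ i.rev := by
    intro i h
    have := congrArg Fin.val h
    simp only [Fin.val_rev] at this
    have := i.2
    omega
  have hdiff : ∀ i j : Idx r, (i : ℕ) + 1 = j → Er i i - Er j j ∈ T := by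
    intro i j h
    have h1 := hcomm _ (hup i j h) _ (hdown i j h)
    rw [Er_mul, Er_mul, if_pos rfl, if_pos rfl, if_neg (hrevne _), if_neg (hrevne _), add_zero,
      add_zero] at h1
    exact h1
  have h0 : ∀ (n : ℕ) (i : Idx r), (i : ℕ) = n → Er (botI r) (botI r) - Er i i ∈ T := by
    intro n
    induction n with
    | zero =>
      intro i hi
      have : i = botI r := Fin.ext hi
      subst this
      simp
    | succ n ih =>
      intro i hi
      have h1 := ih ⟨n, by have := i.2; omega⟩ rfl
      have h2 := hdiff ⟨n, by have := i.2; omega⟩ i hi.symm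
      have := T.add_mem h1 h2
      rwa [sub_add_sub_cancel] at this
  have hsum : ∑ i : Idx r, Er i i = (2:ℚ) • (1 : Matrix (Idx r) (Idx r) ℚ) := by
    simp only [Er, Finset.sum_add_distrib]
    have e : ∑ i : Idx r, Matrix.single i.rev i.rev (1:ℚ) = ∑ i : Idx r, Matrix.single i i 1 :=
      Equiv.sum_comp Fin.revPerm (fun i : Idx r => Matrix.single i i (1:ℚ))
    rw [e, two_smul]
    have : ∑ i : Idx r, Matrix.single i i (1:ℚ) = 1 := by
      ext a b
      simp only [Matrix.sum_apply, Matrix.single_apply, Matrix.one_apply, ite_and]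
      rw [Finset.sum_ite_eq' Finset.univ a, if_pos (Finset.mem_univ a)]
    rw [this]
  have hbot : Er (botI r) (botI r) ∈ T := by
    have h1 : ∑ i : Idx r, (Er (botI r) (botI r) - Er i i) ∈ T :=
      T.sum_mem fun i _ => h0 _ i rfl
    rw [Finset.sum_sub_distrib, hsum, Finset.sum_const, Finset.card_univ, Fintype.card_fin,
      ← Nat.cast_smul_eq_nsmul ℚ] at h1
    have h2 := T.add_mem h1 (T.smul_mem 2 hone)
    rw [sub_add_cancel] at h2
    have h3 := T.smul_mem ((2*r+4 : ℕ) : ℚ)⁻¹ h2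
    rwa [smul_smul, inv_mul_cancel₀ (by positivity), one_smul] at h3
  have hdiag : ∀ i : Idx r, Er i i ∈ T := by
    intro i
    have := T.sub_mem hbot (h0 _ i rfl)
    rwa [sub_sub_cancel] at this
  have hdist : ∀ d : ℕ, ∀ i j : Idx r, (i : ℕ) + d = j → Er i j ∈ T := by
    intro d
    induction d using Nat.strong_induction_on with
    | _ d ih =>
      intro i j hij
      rcases d with _ | _ | d
      · have : i = j := Fin.ext hij
        subst this; exact hdiag i
      · exact hup i j hij
      · have hj := j.2
        let k : Idx r := ⟨i + (d + 1), by omega⟩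
        have hk : (k : ℕ) = i + (d + 1) := rfl
        have h1 := hcomm _ (ih (d+1) (by omega) i k rfl) _ (hup k j (by omega))
        have hji : j ≠ i := by rintro rfl; omega
        rw [Er_mul, Er_mul, if_pos rfl, if_neg (hrevne _), if_neg hji, add_zero, zero_add] at h1
        split_ifs at h1 with h
        · -- here `j = -i`, and the extra term `E_{k,-k}` has smaller distance
          have hv := congrArg Fin.val h
          simp only [Fin.val_rev] at hv
          have hkk : Er k k.rev ∈ T := by
            rw [← Er_rev, Fin.rev_rev]
            apply ih d (by omega)
            simp only [Fin.val_rev]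
            omega
          have := T.add_mem h1 hkk
          rwa [sub_add_cancel] at this
        · rwa [sub_zero] at h1
  have hall : ∀ i j : Idx r, Er i j ∈ T := by
    intro i j
    rcases le_total (i : ℕ) j with h | h
    · exact hdist (j - i) i j (by omega)
    · rw [← Er_rev]
      apply hdist (i - j)
      simp only [Fin.val_rev]
      have := i.2
      omega
  intro x hx
  rw [← hTm, revAlg_eq_sum x hx]
  exact T.smul_mem _ (T.sum_mem fun i _ => T.sum_mem fun j _ => T.smul_mem _ (hall i j))

/-- Apply the reversal of the index set in the positions where `ε` is true. -/
def flipF (ε : Fin m → Bool) (g : Fin m → Fin N) : Fin m → Fin N :=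
  fun k => if ε k then (g k).rev else g k

theorem flipF_flipF (ε : Fin m → Bool) (g : Fin m → Fin N) : flipF ε (flipF ε g) = g := by
  funext k
  simp only [flipF]
  split_ifs <;> simp

/-- Invariance under the adjacent transpositions gives invariance under the symmetric group. -/
theorem inv_perm {n : ℕ} (X : Matrix (Fin (n+1) → Fin N) (Fin (n+1) → Fin N) ℚ)
    (hsw : ∀ (i : Fin n) (g f : Fin (n+1) → Fin N),
      X (g ∘ Equiv.swap i.castSucc i.succ) (f ∘ Equiv.swap i.castSucc i.succ) = X g f)
    (σ : Equiv.Perm (Fin (n+1))) : ∀ g f, X (g ∘ σ) (f ∘ σ) = X g f := by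
  have hσ : σ ∈ Submonoid.closure
      (Set.range fun i : Fin n => Equiv.swap i.castSucc i.succ) := by
    rw [Equiv.Perm.mclosure_swap_castSucc_succ]; trivial
  induction hσ using Submonoid.closure_induction with
  | mem x hx =>
    obtain ⟨i, rfl⟩ := hx
    exact hsw i
  | one => intro g f; rfl
  | mul x y _ _ hx hy =>
    intro g f
    have e : ∀ g : Fin (n+1) → Fin N, g ∘ ⇑(x * y) = (g ∘ x) ∘ y := fun g => rfl
    rw [e, e, hy, hx]

/-- Conjugating the sign change at position `0` by permutations gives the one at every position. -/
theorem inv_flip {n : ℕ} (X : Matrix (Fin (n+1) → Fin N) (Fin (n+1) → Fin N) ℚ)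
    (hperm : ∀ (σ : Equiv.Perm (Fin (n+1))) g f, X (g ∘ σ) (f ∘ σ) = X g f)
    (hflip : ∀ g f, X (Function.update g 0 (g 0).rev) (Function.update f 0 (f 0).rev) = X g f)
    (ε : Fin (n+1) → Bool) : ∀ g f, X (flipF ε g) (flipF ε f) = X g f := by
  have hk : ∀ (k : Fin (n+1)) g f,
      X (Function.update g k (g k).rev) (Function.update f k (f k).rev) = X g f := by
    intro k g f
    have e : ∀ g : Fin (n+1) → Fin N, Function.update g k (g k).rev ∘ Equiv.swap 0 k =
        Function.update (g ∘ Equiv.swap 0 k) 0 ((g ∘ Equiv.swap 0 k) 0).rev := by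
      intro g
      funext l
      by_cases h : l = 0
      · subst h; simp
      · rw [Function.update_of_ne h, Function.comp_apply, Function.comp_apply,
          Function.update_of_ne]
        intro h'
        apply h
        rw [Equiv.swap_apply_eq_iff] at h'
        simpa using h'
    rw [← hperm (Equiv.swap 0 k), e, e, hflip, hperm]
  have hs : ∀ (s : Finset (Fin (n+1))) (g f : Fin (n+1) → Fin N),
      X (flipF (fun k => decide (k ∈ s)) g) (flipF (fun k => decide (k ∈ s)) f) = X g f := by
    intro s
    induction s using Finset.induction_on with
    | empty => intro g f; simp [show ∀ g : Fin (n+1) → Fin N, flipF (fun _ => false) g = g from fun _ => rfl]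
    | insert a s ha ih =>
      intro g f
      have e : ∀ g : Fin (n+1) → Fin N, flipF (fun k => decide (k ∈ insert a s)) g =
          Function.update (flipF (fun k => decide (k ∈ s)) g) a
            (flipF (fun k => decide (k ∈ s)) g a).rev := by
        intro g
        funext l
        by_cases h : l = a
        · subst h; simp [flipF, ha]
        · simp [flipF, h]
      rw [e, e, hk, ih]
  intro g f
  have e : ε = fun k => decide (k ∈ Finset.univ.filter fun k => ε k = true) := by
    funext k; simp
  rw [e]
  exact hs _ g f

/-- `E_{ij} + E_{-i,-j}` as the sum of the translates of `E_{ij}` under the reversal. -/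
theorem Er_apply (i j a b : Fin N) : Er i j a b =
    ∑ e : Bool, if (if e then a.rev else a) = i ∧ (if e then b.rev else b) = j
      then (1:ℚ) else 0 := by
  have e : ∀ x y : Fin N, x.rev = y ↔ y.rev = x := by
    intro x y
    constructor <;> (rintro rfl; simp)
  simp only [Er, Matrix.add_apply, Matrix.single_apply, Fintype.sum_bool, if_true,
    Bool.false_eq_true, if_false]
  rw [add_comm]
  simp only [e a, e b, eq_comm (a := a) (b := i), eq_comm (a := b) (b := j)]

/-- A matrix invariant under the Weyl group of type `B` is the average of its Weyl group
translates, hence a combination of symmetrised tensors of the `Er i j`. -/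
theorem invariant_eq_sum {n : ℕ} (X : Matrix (Fin (n+1) → Fin N) (Fin (n+1) → Fin N) ℚ)
    (hperm : ∀ (σ : Equiv.Perm (Fin (n+1))) g f, X (g ∘ σ) (f ∘ σ) = X g f)
    (hflip : ∀ (ε : Fin (n+1) → Bool) g f, X (flipF ε g) (flipF ε f) = X g f) :
    ((Fintype.card (Equiv.Perm (Fin (n+1))) * Fintype.card (Fin (n+1) → Bool) : ℕ) : ℚ) • X =
      ∑ g, ∑ f, X g f • symT (fun k => Er (g k) (f k)) := by
  ext a b
  have key : ∀ (g f : Fin (n+1) → Fin N) (σ : Equiv.Perm (Fin (n+1))),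
      ten ((fun k => Er (g k) (f k)) ∘ σ) a b = ∑ ε : Fin (n+1) → Bool,
        if (flipF ε a) ∘ σ.symm = g ∧ (flipF ε b) ∘ σ.symm = f then (1:ℚ) else 0 := by
    intro g f σ
    simp only [ten, Function.comp_apply, Er_apply]
    rw [Finset.prod_univ_sum]
    simp only [Fintype.piFinset_univ]
    refine Finset.sum_congr rfl fun ε _ => ?_
    rw [Finset.prod_ite_zero]
    simp only [Finset.prod_const_one]
    congr 1
    rw [eq_iff_iff]
    constructor
    · intro h
      constructor <;> funext k
      · have := (h (σ.symm k) (Finset.mem_univ _)).1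
        simpa [flipF] using this
      · have := (h (σ.symm k) (Finset.mem_univ _)).2
        simpa [flipF] using this
    · rintro ⟨rfl, rfl⟩ k _
      simp [flipF]
  have hR : (∑ g, ∑ f, X g f • symT (fun k => Er (g k) (f k))) a b =
      ∑ σ : Equiv.Perm (Fin (n+1)), ∑ ε : Fin (n+1) → Bool, ∑ g, ∑ f,
        X g f * if (flipF ε a) ∘ σ.symm = g ∧ (flipF ε b) ∘ σ.symm = f then (1:ℚ) else 0 := by
    simp only [Matrix.sum_apply, Matrix.smul_apply, symT, key, smul_eq_mul, Finset.mul_sum]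
    have : ∀ g : Fin (n+1) → Fin N, (∑ f, ∑ σ : Equiv.Perm (Fin (n+1)), ∑ ε : Fin (n+1) → Bool,
        X g f * if (flipF ε a) ∘ σ.symm = g ∧ (flipF ε b) ∘ σ.symm = f then (1:ℚ) else 0) =
        ∑ σ : Equiv.Perm (Fin (n+1)), ∑ ε : Fin (n+1) → Bool, ∑ f,
        X g f * if (flipF ε a) ∘ σ.symm = g ∧ (flipF ε b) ∘ σ.symm = f then (1:ℚ) else 0 := by
      intro g
      rw [Finset.sum_comm]
      exact Finset.sum_congr rfl fun σ _ => Finset.sum_comm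
    simp only [this]
    rw [Finset.sum_comm]
    exact Finset.sum_congr rfl fun σ _ => Finset.sum_comm
  rw [hR]
  have hin : ∀ (σ : Equiv.Perm (Fin (n+1))) (ε : Fin (n+1) → Bool), (∑ g, ∑ f,
        X g f * if (flipF ε a) ∘ σ.symm = g ∧ (flipF ε b) ∘ σ.symm = f then (1:ℚ) else 0) =
        X a b := by
    intro σ ε
    rw [Finset.sum_eq_single (flipF ε a ∘ σ.symm), Finset.sum_eq_single (flipF ε b ∘ σ.symm)]
    · rw [if_pos ⟨rfl, rfl⟩, mul_one, hperm, hflip]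
    · intro f _ hf
      rw [if_neg fun h => hf h.2.symm, mul_zero]
    · intro h; exact absurd (Finset.mem_univ _) h
    · intro g _ hg
      refine Finset.sum_eq_zero fun f _ => ?_
      rw [if_neg fun h => hg h.1.symm, mul_zero]
    · intro h; exact absurd (Finset.mem_univ _) h
  simp only [hin, Finset.sum_const, Finset.card_univ, Matrix.smul_apply, smul_eq_mul, nsmul_eq_mul]
  push_cast
  ring

/-- The classical double centralizer theorem: a matrix on the tensor power invariant under the Weyl
group of type `B` lies in every algebra containing the simple generators `prim (Er i j)`,
`j = i + 1`. -/
theorem invariant_mem {r n : ℕ}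
    (S : Subalgebra ℚ (Matrix (Fin (n+1) → Idx r) (Fin (n+1) → Idx r) ℚ))
    (hS : ∀ i j : Idx r, (i : ℕ) + 1 = j → prim (n+1) (Er i j) ∈ S)
    (X : Matrix (Fin (n+1) → Idx r) (Fin (n+1) → Idx r) ℚ)
    (hsw : ∀ (i : Fin n) (g f : Fin (n+1) → Idx r),
      X (g ∘ Equiv.swap i.castSucc i.succ) (f ∘ Equiv.swap i.castSucc i.succ) = X g f)
    (hflip : ∀ g f, X (Function.update g 0 (g 0).rev) (Function.update f 0 (f 0).rev) = X g f) :
    X ∈ S := by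
  have h := invariant_eq_sum X (inv_perm X hsw) (inv_flip X (inv_perm X hsw) hflip)
  have h1 : ∑ g, ∑ f, X g f • symT (fun k => Er (g k) (f k)) ∈ S := by
    refine S.sum_mem fun g _ => S.sum_mem fun f _ => S.smul_mem ?_ _
    exact symT_mem (revAlg _) S (prim_mem_of_simple S hS) _ _ (fun k => Er_mem_revAlg _ _) le_rfl
  rw [← h] at h1
  have hne : ((Fintype.card (Equiv.Perm (Fin (n+1))) * Fintype.card (Fin (n+1) → Bool) : ℕ) : ℚ)
      ≠ 0 := by
    rw [Nat.cast_ne_zero]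
    exact mul_ne_zero Fintype.card_ne_zero Fintype.card_ne_zero
  have := S.smul_mem h1 ((Fintype.card (Equiv.Perm (Fin (n+1))) *
    Fintype.card (Fin (n+1) → Bool) : ℕ) : ℚ)⁻¹
  rwa [smul_smul, inv_mul_cancel₀ hne, one_smul] at this

end Classical

/-! ### Commutation identities at one and two positions -/

/-- Entrywise form of the commutation of the matrix `M`, with rows `(x, y)` and columns `(z, w)`,
on two adjacent tensor positions with the operator of `H_i` on these positions. -/
def TwoSite {N : ℕ} (M : Fin N → Fin N → Fin N → Fin N → Kq) : Prop := ∀ x y z w,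
  (if x = y then qv⁻¹ * M x y z w else M y x z w +
    if y < x then (qv⁻¹ - qv) * M x y z w else 0) =
  (if z = w then qv⁻¹ * M x y z w else M x y w z +
    if w < z then (qv⁻¹ - qv) * M x y z w else 0)

/-- The two terms of the coproduct of `𝔼_i` on adjacent positions; the adjacency `l + 1 = h` makes
every other index compare with `l` and `h` in the same way. -/
theorem twoSite_E {N : ℕ} (l h : Fin N) (hl : (l : ℕ) + 1 = h) :
    TwoSite (fun x y z w => Matrix.single l h 1 x z * Matrix.diagonal (fun j => if j = l then qv⁻¹ else if j = h then qv else 1) y w + (1 : Matrix _ _ Kq) x z * Matrix.single l h 1 y w) := by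
  have hq := qv_ne_zero
  have hlh : l < h := Fin.lt_def.2 (by omega)
  have hx : ∀ x, x < h ↔ x = l ∨ x < l := fun x => by simp only [Fin.lt_def, Fin.ext_iff]; omega
  intro x y z w
  simp only [Matrix.single_apply, Matrix.diagonal_apply, Matrix.one_apply]
  grind (splits := 25)

theorem twoSite_D {N : ℕ} (d : Fin N → Kq) :
    TwoSite (fun x y z w => Matrix.diagonal d x z * Matrix.diagonal d y w) := by
  intro x y z w
  simp only [Matrix.diagonal_apply]
  grind

/-- The two terms of the coproduct of `𝔽_i` on adjacent positions. -/
theorem twoSite_F {N : ℕ} (l h : Fin N) (hl : (l : ℕ) + 1 = h) :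
    TwoSite (fun x y z w => Matrix.single h l 1 x z * (1 : Matrix _ _ Kq) y w + Matrix.diagonal (fun j => if j = l then qv else if j = h then qv⁻¹ else 1) x z * Matrix.single h l 1 y w) := by
  have hq := qv_ne_zero
  have hlh : l < h := Fin.lt_def.2 (by omega)
  have hx : ∀ x, x < h ↔ x = l ∨ x < l := fun x => by simp only [Fin.lt_def, Fin.ext_iff]; omega
  intro x y z w
  simp only [Matrix.single_apply, Matrix.diagonal_apply, Matrix.one_apply]
  grind (splits := 25)

/-- Entrywise form of the commutation of the matrix `c` on the first tensor position with the
operator of `H_0` on this position. -/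
def OneSite {N : ℕ} (c : Matrix (Fin N) (Fin N) Kq) : Prop := ∀ x z,
  c x.rev z + (if x < x.rev then (qv⁻¹ - qv) * c x z else 0) =
  c x z.rev + (if z < z.rev then (qv⁻¹ - qv) * c x z else 0)

theorem oneSite_diag {N : ℕ} (d : Fin N → Kq) (hd : ∀ j, d j.rev = d j) : OneSite (Matrix.diagonal d) := by
  intro x z
  have e : x.rev = z ↔ x = z.rev := by
    constructor <;> (rintro rfl; simp)
  simp only [Matrix.diagonal_apply, e, hd]
  grind

/-- The contribution of the first position to `ℬ_i`, `i ≠ 0`: the matrix commutes with the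
reversal, and `e` says that its entries do not change the sign of the index. -/
theorem oneSite_B {N : ℕ} (hN : ∀ x : Fin N, x.rev ≠ x) (l h : Fin N)
    (e : l < l.rev ↔ h < h.rev) :
    OneSite (Matrix.single l h 1 + Matrix.single l.rev h.rev 1) := by
  intro x z
  have e1 : ∀ x y : Fin N, x.rev = y ↔ y.rev = x := by
    intro x y; constructor <;> (rintro rfl; simp)
  simp only [Matrix.single_apply, Matrix.add_apply]
  have e2 := e1 l x
  have e3 := e1 h z
  have e4 : l.rev = x.rev ↔ l = x := by simp
  have e5 : h.rev = z.rev ↔ h = z := by simp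
  have e6 := e1 x l
  have e7 := e1 z h
  have e8 := hN l
  have e9 := hN h
  grind (splits := 25)

/-- The contribution of the first position to `ℬ_0`. The diagonal term `κ_0⁻¹` compensates for the
off-diagonal ones, which interchange the opposite indices `l` and `h`. -/
theorem oneSite_B0 {N : ℕ} (l h : Fin N) (e : l.rev = h) (hlt : l < h) :
    OneSite (Matrix.single l h 1 + Matrix.single h l 1 + Matrix.diagonal (fun j => if j = l then qv⁻¹ else if j = h then qv else 1)) := by
  have hq := qv_ne_zero
  have e' : h.rev = l := by rw [← e]; simp
  intro x z
  have e1 : ∀ x y : Fin N, x.rev = y ↔ y.rev = x := by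
    intro x y; constructor <;> (rintro rfl; simp)
  have e2 := e1 x l
  have e3 := e1 x h
  have e4 := e1 z l
  have e5 := e1 z h
  have e6 := e1 z x
  have e7 : x.rev = z.rev ↔ x = z := by simp
  simp only [Matrix.single_apply, Matrix.add_apply, Matrix.diagonal_apply]
  grind (splits := 25)

/-! ### Matrices of the generators -/

section Gens

variable {r n : ℕ}

/-- The matrix of an operator on `V̄` in the basis `η_j`. -/
abbrev lmat (A : Module.End Kq (Vb r)) : Matrix (Idx r) (Idx r) Kq :=
  LinearMap.toMatrixAlgEquiv' A

/-- The matrix of an operator on `V̄^⊗m` in the basis `M_f`. -/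
abbrev tmat {m : ℕ} (A : Module.End Kq (TP r m)) :
    Matrix (Fin m → Idx r) (Fin m → Idx r) Kq :=
  LinearMap.toMatrixAlgEquiv' A

theorem lmat_apply (A : Module.End Kq (Vb r)) (x z : Idx r) :
    lmat A x z = A (Pi.single z 1) x := by
  rw [lmat, LinearMap.toMatrixAlgEquiv'_apply]

theorem tmat_apply {m : ℕ} (A : Module.End Kq (TP r m)) (g f : Fin m → Idx r) :
    tmat A g f = A (Pi.single f 1) g := by
  rw [tmat, LinearMap.toMatrixAlgEquiv'_apply]

theorem tmat_add {m : ℕ} (A B : Module.End Kq (TP r m)) : tmat (A + B) = tmat A + tmat B :=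
  map_add _ _ _

theorem tmat_mul {m : ℕ} (A B : Module.End Kq (TP r m)) : tmat (A * B) = tmat A * tmat B :=
  map_mul _ _ _

theorem tmat_smul {m : ℕ} (t : Kq) (A : Module.End Kq (TP r m)) : tmat (t • A) = t • tmat A :=
  map_smul _ _ _

theorem lmat_opE (a : Fin (2*r+3)) : lmat (opE r a) = Matrix.single (loI a) (hiI a) 1 := by
  ext x z
  rw [lmat_apply]
  simp only [opE, diagMove, LinearMap.coe_mk, AddHom.coe_mk, Pi.single_apply, Matrix.single_apply]
  grind

theorem lmat_opF (a : Fin (2*r+3)) : lmat (opF r a) = Matrix.single (hiI a) (loI a) 1 := by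
  ext x z
  rw [lmat_apply]
  simp only [opF, diagMove, LinearMap.coe_mk, AddHom.coe_mk, Pi.single_apply, Matrix.single_apply]
  grind

/-- The eigenvalues of `κ_i`. -/
def kap (a : Fin (2*r+3)) : Idx r → Kq :=
  fun j => if j = loI a then qv else if j = hiI a then qv⁻¹ else 1

/-- The eigenvalues of `κ_i⁻¹`. -/
def kapi (a : Fin (2*r+3)) : Idx r → Kq :=
  fun j => if j = loI a then qv⁻¹ else if j = hiI a then qv else 1

theorem lmat_opK (a : Fin (2*r+3)) : lmat (opK r a) = Matrix.diagonal (kap a) := by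
  ext x z
  rw [lmat_apply]
  simp only [opK, diagMove, LinearMap.coe_mk, AddHom.coe_mk, Pi.single_apply,
    Matrix.diagonal_apply, kap, id]
  grind

theorem lmat_opKinv (a : Fin (2*r+3)) : lmat (opKinv r a) = Matrix.diagonal (kapi a) := by
  ext x z
  rw [lmat_apply]
  simp only [opKinv, diagMove, LinearMap.coe_mk, AddHom.coe_mk, Pi.single_apply,
    Matrix.diagonal_apply, kapi, id]
  grind

theorem tmat_tensorOp {m : ℕ} (A : Fin m → Module.End Kq (Vb r)) :
    tmat (tensorOp r m A) = ten (fun k => lmat (A k)) := by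
  ext g f
  rw [tmat_apply]
  simp only [tensorOp, matOp, LinearMap.coe_mk, AddHom.coe_mk, ten, lmat_apply]
  rw [Finset.sum_eq_single f]
  · simp
  · intro f' _ h; simp [h]
  · intro h; exact absurd (Finset.mem_univ f) h

/-- The matrices `1, …, 1, x, d, …, d`. -/
def chainE (x d : Matrix (Idx r) (Idx r) Kq) {m : ℕ} (j : Fin m) : Fin m → Matrix (Idx r) (Idx r) Kq :=
  fun k => if (k : ℕ) < j then 1 else if k = j then x else d

/-- The matrices `d, …, d, x, 1, …, 1`. -/
def chainF (x d : Matrix (Idx r) (Idx r) Kq) {m : ℕ} (j : Fin m) : Fin m → Matrix (Idx r) (Idx r) Kq :=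
  fun k => if (k : ℕ) < j then d else if k = j then x else 1

theorem tmat_opEE {m : ℕ} (a : Fin (2*r+3)) : tmat (opEE r m a) =
    ∑ j, ten (chainE (Matrix.single (loI a) (hiI a) 1) (Matrix.diagonal (kapi a)) j) := by
  rw [opEE, tmat, map_sum]
  refine Finset.sum_congr rfl fun j _ => ?_
  rw [← tmat, tmat_tensorOp]
  congr 1
  funext k
  simp only [chainE]
  split_ifs
  · exact map_one _
  · exact lmat_opE a
  · exact lmat_opKinv a

theorem tmat_opFF {m : ℕ} (a : Fin (2*r+3)) : tmat (opFF r m a) =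
    ∑ j, ten (chainF (Matrix.single (hiI a) (loI a) 1) (Matrix.diagonal (kap a)) j) := by
  rw [opFF, tmat, map_sum]
  refine Finset.sum_congr rfl fun j _ => ?_
  rw [← tmat, tmat_tensorOp]
  congr 1
  funext k
  simp only [chainF]
  split_ifs
  · exact lmat_opK a
  · exact lmat_opF a
  · exact map_one _

theorem tmat_opKK {m : ℕ} (a : Fin (2*r+3)) : tmat (opKK r m a) =
    ten (fun _ => Matrix.diagonal (kap a)) := by
  rw [opKK, tmat_tensorOp]; simp only [lmat_opK]

theorem tmat_opKKinv {m : ℕ} (a : Fin (2*r+3)) : tmat (opKKinv r m a) =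
    ten (fun _ => Matrix.diagonal (kapi a)) := by
  rw [opKKinv, tmat_tensorOp]; simp only [lmat_opKinv]

/-! ### The Hecke operators -/

theorem tmat_mul_apply {m : ℕ} (A : Module.End Kq (TP r m))
    (X : Matrix (Fin m → Idx r) (Fin m → Idx r) Kq) (g f : Fin m → Idx r) :
    (tmat A * X) g f = A (fun g' => X g' f) g := by
  have h : LinearMap.toMatrixAlgEquiv' A = LinearMap.toMatrix' A := rfl
  have := congrFun (LinearMap.toMatrix'_mulVec A (fun g' => X g' f)) g
  rw [← this, tmat, h]
  rfl

/-- Right multiplication by a symmetric operator acts on the rows as the operator does on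
vectors. -/
theorem mul_tmat_apply {m : ℕ} (A : Module.End Kq (TP r m)) (hA : (tmat A).transpose = tmat A)
    (X : Matrix (Fin m → Idx r) (Fin m → Idx r) Kq) (g f : Fin m → Idx r) :
    (X * tmat A) g f = A (fun f' => X g f') f := by
  have := tmat_mul_apply A X.transpose f g
  rw [← hA, ← Matrix.transpose_mul, Matrix.transpose_apply] at this
  exact this

theorem R0op_apply (v : TP r (n+1)) (g : Fin (n+1) → Idx r) :
    R0op r (n+1) v g = v (Function.update g 0 (g 0).rev) +
      (if g 0 < (g 0).rev then (qv⁻¹ - qv) * v g else 0) := by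
  rw [R0op, dif_pos (Nat.succ_pos n)]
  rfl

theorem Rsw_apply (p : Fin n) (v : TP r (n+1)) (g : Fin (n+1) → Idx r) :
    Rsw r (n+1) p v g = if g p.castSucc = g p.succ then qv⁻¹ * v g
      else v (g ∘ Equiv.swap p.castSucc p.succ) +
        (if g p.succ < g p.castSucc then (qv⁻¹ - qv) * v g else 0) := by
  rw [Rsw, dif_pos (Nat.succ_lt_succ p.2)]
  rfl

theorem R0op_symm : (tmat (R0op r (n+1))).transpose = tmat (R0op r (n+1)) := by
  ext g f
  rw [Matrix.transpose_apply, tmat_apply, tmat_apply, R0op_apply, R0op_apply]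
  have e : Function.update f 0 (f 0).rev = g ↔ Function.update g 0 (g 0).rev = f := by
    constructor <;> (rintro rfl; simp)
  simp only [Pi.single_apply, e]
  by_cases h : f = g
  · subst h; rfl
  · simp [h, Ne.symm h]

theorem Rsw_symm (p : Fin n) : (tmat (Rsw r (n+1) p)).transpose = tmat (Rsw r (n+1) p) := by
  ext g f
  rw [Matrix.transpose_apply, tmat_apply, tmat_apply, Rsw_apply, Rsw_apply]
  have e : ∀ f g : Fin (n+1) → Idx r, f ∘ Equiv.swap p.castSucc p.succ = g →
      g ∘ Equiv.swap p.castSucc p.succ = f := by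
    rintro f _ rfl; funext k; simp
  by_cases h : f = g
  · subst h; rfl
  · have h' : ¬ g = f := fun h' => h h'.symm
    simp only [Pi.single_apply, h, h', if_false, mul_zero, ite_self, add_zero]
    by_cases h2 : f ∘ Equiv.swap p.castSucc p.succ = g
    · have h3 := e _ _ h2
      have a1 : g p.castSucc = f p.succ := by rw [← h2]; simp
      have a2 : g p.succ = f p.castSucc := by rw [← h2]; simp
      rw [if_pos h2, if_pos h3, a1, a2]
      simp only [eq_comm]
    · have h3 : ¬ g ∘ Equiv.swap p.castSucc p.succ = f := fun h3 => h2 (e _ _ h3)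
      rw [if_neg h2, if_neg h3]
      simp

/-- Entrywise form of commutation with `Ψ(H_0)`. -/
theorem comm_R0op_iff (X : Matrix (Fin (n+1) → Idx r) (Fin (n+1) → Idx r) Kq) :
    tmat (R0op r (n+1)) * X = X * tmat (R0op r (n+1)) ↔ ∀ g f,
      X (Function.update g 0 (g 0).rev) f +
        (if g 0 < (g 0).rev then (qv⁻¹ - qv) * X g f else 0) =
      X g (Function.update f 0 (f 0).rev) +
        (if f 0 < (f 0).rev then (qv⁻¹ - qv) * X g f else 0) := by
  rw [← Matrix.ext_iff]
  refine forall_congr' fun g => forall_congr' fun f => ?_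
  rw [tmat_mul_apply, mul_tmat_apply _ R0op_symm, R0op_apply, R0op_apply]

/-- Entrywise form of commutation with `Ψ(H_{p+1})`. -/
theorem comm_Rsw_iff (p : Fin n) (X : Matrix (Fin (n+1) → Idx r) (Fin (n+1) → Idx r) Kq) :
    tmat (Rsw r (n+1) p) * X = X * tmat (Rsw r (n+1) p) ↔ ∀ g f,
      (if g p.castSucc = g p.succ then qv⁻¹ * X g f
        else X (g ∘ Equiv.swap p.castSucc p.succ) f +
        (if g p.succ < g p.castSucc then (qv⁻¹ - qv) * X g f else 0)) =
      (if f p.castSucc = f p.succ then qv⁻¹ * X g f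
        else X g (f ∘ Equiv.swap p.castSucc p.succ) +
        (if f p.succ < f p.castSucc then (qv⁻¹ - qv) * X g f else 0)) := by
  rw [← Matrix.ext_iff]
  refine forall_congr' fun g => forall_congr' fun f => ?_
  rw [tmat_mul_apply, mul_tmat_apply _ (Rsw_symm p), Rsw_apply, Rsw_apply]

end Gens

/-! ### The two actions commute -/

section Commute

variable {r n : ℕ}

theorem ten_comm_R0op (c : Fin (n+1) → Matrix (Idx r) (Idx r) Kq) (hc : OneSite (c 0)) :
    tmat (R0op r (n+1)) * ten c = ten c * tmat (R0op r (n+1)) := by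
  rw [comm_R0op_iff]
  intro g f
  have e : ∀ g f : Fin (n+1) → Idx r, ten c g f =
      c 0 (g 0) (f 0) * ∏ k : Fin n, c k.succ (g k.succ) (f k.succ) := fun g f => by
    rw [ten, Fin.prod_univ_succ]
  simp only [e, Function.update_self, ne_eq, Fin.succ_ne_zero, not_false_eq_true,
    Function.update_of_ne]
  have h := hc (g 0) (f 0)
  generalize (∏ k : Fin n, c k.succ (g k.succ) (f k.succ)) = Q
  calc _ = (c 0 (g 0).rev (f 0) + if g 0 < (g 0).rev then (qv⁻¹ - qv) * c 0 (g 0) (f 0) else 0) * Q := by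
        split_ifs <;> ring
    _ = _ := by rw [h]; split_ifs <;> ring

/-- A matrix which is the product of a two-site matrix at the positions `p`, `p + 1` and of a
factor not depending on these positions. -/
theorem comm_Rsw_of_factor (p : Fin n) (X : Matrix (Fin (n+1) → Idx r) (Fin (n+1) → Idx r) Kq)
    (M : Idx r → Idx r → Idx r → Idx r → Kq) (hM : TwoSite M)
    (c : Fin (n+1) → Matrix (Idx r) (Idx r) Kq)
    (hX : ∀ g f, X g f = M (g p.castSucc) (g p.succ) (f p.castSucc) (f p.succ) *
      ∏ k ∈ (Finset.univ.erase p.castSucc).erase p.succ, c k (g k) (f k)) :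
    tmat (Rsw r (n+1) p) * X = X * tmat (Rsw r (n+1) p) := by
  rw [comm_Rsw_iff]
  intro g f
  have e1 : ∏ k ∈ (Finset.univ.erase p.castSucc).erase p.succ,
      c k ((g ∘ Equiv.swap p.castSucc p.succ) k) (f k) =
      ∏ k ∈ (Finset.univ.erase p.castSucc).erase p.succ, c k (g k) (f k) := by
    refine Finset.prod_congr rfl fun k hk => ?_
    simp only [Finset.mem_erase] at hk
    rw [Function.comp_apply, Equiv.swap_apply_of_ne_of_ne hk.2.1 hk.1]
  have e2 : ∏ k ∈ (Finset.univ.erase p.castSucc).erase p.succ,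
      c k (g k) ((f ∘ Equiv.swap p.castSucc p.succ) k) =
      ∏ k ∈ (Finset.univ.erase p.castSucc).erase p.succ, c k (g k) (f k) := by
    refine Finset.prod_congr rfl fun k hk => ?_
    simp only [Finset.mem_erase] at hk
    rw [Function.comp_apply, Equiv.swap_apply_of_ne_of_ne hk.2.1 hk.1]
  have h := hM (g p.castSucc) (g p.succ) (f p.castSucc) (f p.succ)
  rw [hX, hX, hX, e1, e2]
  simp only [Function.comp_apply, Equiv.swap_apply_left, Equiv.swap_apply_right]
  generalize (∏ k ∈ (Finset.univ.erase p.castSucc).erase p.succ, c k (g k) (f k)) = Q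
  calc _ = (if g p.castSucc = g p.succ
        then qv⁻¹ * M (g p.castSucc) (g p.succ) (f p.castSucc) (f p.succ)
        else M (g p.succ) (g p.castSucc) (f p.castSucc) (f p.succ) +
          if g p.succ < g p.castSucc
            then (qv⁻¹ - qv) * M (g p.castSucc) (g p.succ) (f p.castSucc) (f p.succ) else 0) * Q := by
        split_ifs <;> ring
    _ = _ := by rw [h]; split_ifs <;> ring

theorem ten_split (p : Fin n) (c : Fin (n+1) → Matrix (Idx r) (Idx r) Kq) (g f) :
    ten c g f = c p.castSucc (g p.castSucc) (f p.castSucc) * c p.succ (g p.succ) (f p.succ) *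
      ∏ k ∈ (Finset.univ.erase p.castSucc).erase p.succ, c k (g k) (f k) := by
  rw [ten, ← Finset.mul_prod_erase _ _ (Finset.mem_univ p.castSucc),
    ← Finset.mul_prod_erase (Finset.univ.erase p.castSucc) _
      (a := p.succ) (by simp [Fin.ext_iff]), mul_assoc]

theorem ten_comm_Rsw (p : Fin n) (c : Fin (n+1) → Matrix (Idx r) (Idx r) Kq) (d : Idx r → Kq)
    (h1 : c p.castSucc = Matrix.diagonal d) (h2 : c p.succ = Matrix.diagonal d) :
    tmat (Rsw r (n+1) p) * ten c = ten c * tmat (Rsw r (n+1) p) := by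
  refine comm_Rsw_of_factor p _ _ (twoSite_D d) c fun g f => ?_
  rw [ten_split p, h1, h2]

theorem ten_add_comm_Rsw (p : Fin n) (c c' : Fin (n+1) → Matrix (Idx r) (Idx r) Kq)
    (hM : TwoSite (fun x y z w => c p.castSucc x z * c p.succ y w +
      c' p.castSucc x z * c' p.succ y w))
    (h : ∀ k, k ≠ p.castSucc → k ≠ p.succ → c' k = c k) :
    tmat (Rsw r (n+1) p) * (ten c + ten c') = (ten c + ten c') * tmat (Rsw r (n+1) p) := by
  refine comm_Rsw_of_factor p _ _ hM c fun g f => ?_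
  rw [Matrix.add_apply, ten_split p, ten_split p c', add_mul]
  congr 2
  refine Finset.prod_congr rfl fun k hk => ?_
  simp only [Finset.mem_erase] at hk
  rw [h k hk.2.1 hk.1]

/-- The sum over `j` of the tensors `ten (C j)` commutes with the Hecke generator at `p`, `p + 1`
when the terms `j = p, p + 1` together do by the two-site identity, and every other term has equal
diagonal factors at these positions. -/
theorem sum_comm_Rsw (p : Fin n) (C : Fin (n+1) → Fin (n+1) → Matrix (Idx r) (Idx r) Kq)
    (hM : TwoSite (fun x y z w => C p.castSucc p.castSucc x z * C p.castSucc p.succ y w +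
      C p.succ p.castSucc x z * C p.succ p.succ y w))
    (h : ∀ k, k ≠ p.castSucc → k ≠ p.succ → C p.succ k = C p.castSucc k)
    (hD : ∀ j, j ≠ p.castSucc → j ≠ p.succ → ∃ d, C j p.castSucc = Matrix.diagonal d ∧
      C j p.succ = Matrix.diagonal d) :
    tmat (Rsw r (n+1) p) * (∑ j, ten (C j)) = (∑ j, ten (C j)) * tmat (Rsw r (n+1) p) := by
  rw [← Finset.add_sum_erase _ _ (Finset.mem_univ p.castSucc),
    ← Finset.add_sum_erase (Finset.univ.erase p.castSucc) _
      (a := p.succ) (by simp [Fin.ext_iff]), ← add_assoc, mul_add, add_mul,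
    ten_add_comm_Rsw p _ _ hM h, Finset.mul_sum, Finset.sum_mul]
  congr 1
  refine Finset.sum_congr rfl fun j hj => ?_
  simp only [Finset.mem_erase] at hj
  obtain ⟨d, h1, h2⟩ := hD j hj.2.1 hj.1
  exact ten_comm_Rsw p _ d h1 h2

theorem opEE_comm_Rsw (p : Fin n) (a : Fin (2*r+3)) :
    tmat (Rsw r (n+1) p) * tmat (opEE r (n+1) a) = tmat (opEE r (n+1) a) * tmat (Rsw r (n+1) p) := by
  rw [tmat_opEE]
  refine sum_comm_Rsw p _ ?_ ?_ ?_
  · have : TwoSite (fun x y z w => Matrix.single (loI a) (hiI a) 1 x z *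
        Matrix.diagonal (kapi a) y w + (1 : Matrix _ _ Kq) x z *
        Matrix.single (loI a) (hiI a) 1 y w) := twoSite_E (loI a) (hiI a) rfl
    simpa [chainE, Fin.ext_iff] using this
  · intro k h1 h2
    replace h1 : (k : ℕ) ≠ p := fun h => h1 (Fin.ext h)
    replace h2 : (k : ℕ) ≠ p + 1 := fun h => h2 (Fin.ext h)
    simp only [chainE, Fin.ext_iff, Fin.val_castSucc, Fin.val_succ, h1, h2, if_false]
    split_ifs <;> first | rfl | omega
  · intro j h1 h2
    replace h1 : (j : ℕ) ≠ p := fun h => h1 (Fin.ext h)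
    replace h2 : (j : ℕ) ≠ p + 1 := fun h => h2 (Fin.ext h)
    by_cases h : (p : ℕ) < j
    · refine ⟨fun _ => 1, ?_, ?_⟩ <;>
      · simp only [chainE, Fin.val_castSucc, Fin.val_succ]
        rw [if_pos (by omega), Matrix.diagonal_one]
    · refine ⟨kapi a, ?_, ?_⟩ <;>
      · simp only [chainE, Fin.ext_iff, Fin.val_castSucc, Fin.val_succ]
        rw [if_neg (by omega), if_neg (by omega)]

theorem opFF_comm_Rsw (p : Fin n) (a : Fin (2*r+3)) :
    tmat (Rsw r (n+1) p) * tmat (opFF r (n+1) a) = tmat (opFF r (n+1) a) * tmat (Rsw r (n+1) p) := by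
  rw [tmat_opFF]
  refine sum_comm_Rsw p _ ?_ ?_ ?_
  · have : TwoSite (fun x y z w => Matrix.single (hiI a) (loI a) 1 x z *
        (1 : Matrix _ _ Kq) y w + Matrix.diagonal (kap a) x z *
        Matrix.single (hiI a) (loI a) 1 y w) := twoSite_F (loI a) (hiI a) rfl
    simpa [chainF, Fin.ext_iff] using this
  · intro k h1 h2
    replace h1 : (k : ℕ) ≠ p := fun h => h1 (Fin.ext h)
    replace h2 : (k : ℕ) ≠ p + 1 := fun h => h2 (Fin.ext h)
    simp only [chainF, Fin.ext_iff, Fin.val_castSucc, Fin.val_succ, h1, h2, if_false]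
    split_ifs <;> first | rfl | omega
  · intro j h1 h2
    replace h1 : (j : ℕ) ≠ p := fun h => h1 (Fin.ext h)
    replace h2 : (j : ℕ) ≠ p + 1 := fun h => h2 (Fin.ext h)
    by_cases h : (p : ℕ) < j
    · refine ⟨kap a, ?_, ?_⟩ <;>
      · simp only [chainF, Fin.val_castSucc, Fin.val_succ]
        rw [if_pos (by omega)]
    · refine ⟨fun _ => 1, ?_, ?_⟩ <;>
      · simp only [chainF, Fin.ext_iff, Fin.val_castSucc, Fin.val_succ]
        rw [if_neg (by omega), if_neg (by omega), Matrix.diagonal_one]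

theorem UiSet_comm_Rsw (p : Fin n) {A : Module.End Kq (TP r (n+1))} (hA : A ∈ UiSet r (n+1)) :
    tmat (Rsw r (n+1) p) * tmat A = tmat A * tmat (Rsw r (n+1) p) := by
  have hE : ∀ a, Commute (tmat (Rsw r (n+1) p)) (tmat (opEE r (n+1) a)) := opEE_comm_Rsw p
  have hF : ∀ a, Commute (tmat (Rsw r (n+1) p)) (tmat (opFF r (n+1) a)) := opFF_comm_Rsw p
  have hK : ∀ a, Commute (tmat (Rsw r (n+1) p)) (tmat (opKK r (n+1) a)) := fun a => by
    rw [tmat_opKK]; exact ten_comm_Rsw p _ (kap a) rfl rfl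
  have hKi : ∀ a, Commute (tmat (Rsw r (n+1) p)) (tmat (opKKinv r (n+1) a)) := fun a => by
    rw [tmat_opKKinv]; exact ten_comm_Rsw p _ (kapi a) rfl rfl
  change Commute _ _
  rcases hA with ((hA | ⟨a, -, rfl⟩) | ⟨a, rfl⟩) | ⟨a, rfl⟩
  · rw [Set.mem_singleton_iff.1 hA, opB0, tmat_add, tmat_add, tmat_smul, tmat_mul]
    exact ((hE _).add_right (((hF _).mul_right (hKi _)).smul_right _)).add_right (hKi _)
  · rw [opB, tmat_add, tmat_mul]
    exact (hE _).add_right ((hF _).mul_right (hKi _))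
  · rw [opkk, tmat_mul]
    exact (hK _).mul_right (hKi _)
  · rw [opkkInv, tmat_mul]
    exact (hK _).mul_right (hKi _)

theorem rev_eq_iff {N : ℕ} (x y : Fin N) : x.rev = y ↔ x = y.rev := by
  constructor <;> (rintro rfl; simp)

theorem rev_loI (a : Fin (2*r+3)) : (loI a).rev = hiI a.rev := by
  ext; simp only [loI, hiI, Fin.val_rev]; have := a.2; omega

theorem rev_hiI (a : Fin (2*r+3)) : (hiI a).rev = loI a.rev := by
  ext; simp only [loI, hiI, Fin.val_rev]; have := a.2; omega

theorem loI_ne_hiI (a : Fin (2*r+3)) : loI a ≠ hiI a := by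
  simp [loI, hiI, Fin.ext_iff]

/-- `κ_{-i} κ_i⁻¹` is invariant under the reversal of the index set. -/
theorem kap_mul_kapi_rev (a : Fin (2*r+3)) (j : Idx r) :
    kap a.rev j.rev * kapi a j.rev = kap a.rev j * kapi a j := by
  have e1 : j.rev = loI a.rev ↔ j = hiI a := by rw [← rev_hiI]; simp
  have e2 : j.rev = hiI a.rev ↔ j = loI a := by rw [← rev_loI]; simp
  have e3 : j.rev = loI a ↔ j = hiI a.rev := by rw [rev_eq_iff, rev_loI]
  have e4 : j.rev = hiI a ↔ j = loI a.rev := by rw [rev_eq_iff, rev_hiI]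
  have h1 := loI_ne_hiI a
  have h2 := loI_ne_hiI a.rev
  have hq := qv_ne_zero
  simp only [kap, kapi, e1, e2, e3, e4]
  grind (splits := 20)

theorem chainE_zero (x d : Matrix (Idx r) (Idx r) Kq) :
    chainE x d (0 : Fin (n+1)) = Function.update (fun _ => d) 0 x := by
  funext k
  by_cases h : k = 0
  · subst h; simp [chainE]
  · simp [chainE, h]

theorem chainF_zero_mul (x d d' : Matrix (Idx r) (Idx r) Kq) :
    chainF x d (0 : Fin (n+1)) * (fun _ => d') = Function.update (fun _ => d') 0 (x * d') := by
  funext k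
  by_cases h : k = 0
  · subst h; simp [chainF]
  · simp [chainF, h]

/-- The part of `𝔼_i + t 𝔽_{-i} 𝕂_i⁻¹` supported at the first tensor position, plus a remainder
commuting with `Ψ(H_0)`. -/
theorem opB_split (a : Fin (2*r+3)) (t : Kq) :
    ∃ Y, Commute (tmat (R0op r (n+1))) Y ∧
      tmat (opEE r (n+1) a) + t • (tmat (opFF r (n+1) a.rev) * tmat (opKKinv r (n+1) a)) =
      ten (Function.update (fun _ => Matrix.diagonal (kapi a)) 0
        (Matrix.single (loI a) (hiI a) 1 +
          t • (Matrix.single (hiI a.rev) (loI a.rev) 1 * Matrix.diagonal (kapi a)))) + Y := by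
  refine ⟨(∑ j : Fin n, ten (chainE (Matrix.single (loI a) (hiI a) 1)
      (Matrix.diagonal (kapi a)) j.succ)) +
    t • (∑ j : Fin n, ten (chainF (Matrix.single (hiI a.rev) (loI a.rev) 1)
      (Matrix.diagonal (kap a.rev)) j.succ * fun _ => Matrix.diagonal (kapi a))), ?_, ?_⟩
  · refine Commute.add_right ?_ (Commute.smul_right ?_ _)
    · refine Commute.sum_right _ _ _ fun j _ => ten_comm_R0op _ ?_
      have : chainE (Matrix.single (loI a) (hiI a) 1) (Matrix.diagonal (kapi a)) j.succ 0 =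
          Matrix.diagonal fun _ => 1 := by
        rw [Matrix.diagonal_one]; simp [chainE]
      rw [this]
      exact oneSite_diag _ fun _ => rfl
    · refine Commute.sum_right _ _ _ fun j _ => ten_comm_R0op _ ?_
      rw [Pi.mul_apply]
      have : chainF (Matrix.single (hiI a.rev) (loI a.rev) 1) (Matrix.diagonal (kap a.rev))
          j.succ 0 = Matrix.diagonal (kap a.rev) := by
        simp [chainF]
      rw [this, Matrix.diagonal_mul_diagonal]
      exact oneSite_diag _ (kap_mul_kapi_rev a)
  · rw [tmat_opEE, tmat_opFF, tmat_opKKinv, Finset.sum_mul, Fin.sum_univ_succ, Fin.sum_univ_succ]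
    simp only [ten_mul]
    rw [chainE_zero, chainF_zero_mul, ten_update_add, ten_update_smul, smul_add]
    abel

theorem UiSet_comm_R0op {A : Module.End Kq (TP r (n+1))} (hA : A ∈ UiSet r (n+1)) :
    tmat (R0op r (n+1)) * tmat A = tmat A * tmat (R0op r (n+1)) := by
  have hN : ∀ x : Idx r, x.rev ≠ x := by
    intro x h
    have := congrArg Fin.val h
    rw [Fin.val_rev] at this
    have := x.2
    omega
  change Commute _ _
  rcases hA with ((hA | ⟨a, ha, rfl⟩) | ⟨a, rfl⟩) | ⟨a, rfl⟩
  · have hm : (midI r).rev = midI r := by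
      ext; simp only [Fin.val_rev, midI]; omega
    have hq := qv_ne_zero
    obtain ⟨Y, hY, h⟩ := opB_split (n := n) (midI r) qv
    rw [hm] at h
    rw [Set.mem_singleton_iff.1 hA, opB0, tmat_add, tmat_add, tmat_smul, tmat_mul, h]
    have e : tmat (opKKinv r (n+1) (midI r)) =
        ten (Function.update (fun _ => Matrix.diagonal (kapi (midI r))) 0
          (Matrix.diagonal (kapi (midI r)))) := by
      rw [tmat_opKKinv, Function.update_eq_self_iff.2 rfl]
    rw [add_right_comm, e, ← ten_update_add]
    refine Commute.add_right (ten_comm_R0op _ ?_) hY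
    rw [Function.update_self]
    have e2 : qv • (Matrix.single (hiI (midI r)) (loI (midI r)) (1 : Kq) *
        Matrix.diagonal (kapi (midI r))) = Matrix.single (hiI (midI r)) (loI (midI r)) 1 := by
      ext x z
      rw [Matrix.smul_apply, Matrix.mul_diagonal, Matrix.single_apply, smul_eq_mul]
      split_ifs with h
      · rw [← h.2]; simp [kapi, hq]
      · simp
    rw [e2]
    refine oneSite_B0 (loI (midI r)) (hiI (midI r)) ?_ ?_
    · rw [rev_loI, hm]
    · simp [loI, hiI, Fin.lt_def]
  · have ha' : (a : ℕ) ≠ r + 1 := fun h => ha (Fin.ext h)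
    obtain ⟨Y, hY, h⟩ := opB_split (n := n) a 1
    rw [one_smul, one_smul] at h
    rw [opB, tmat_add, tmat_mul, h]
    refine Commute.add_right (ten_comm_R0op _ ?_) hY
    rw [Function.update_self]
    have e2 : Matrix.single (hiI a.rev) (loI a.rev) (1 : Kq) * Matrix.diagonal (kapi a) =
        Matrix.single (loI a).rev (hiI a).rev 1 := by
      rw [rev_loI, rev_hiI]
      ext x z
      rw [Matrix.mul_diagonal, Matrix.single_apply]
      split_ifs with h
      · rw [← h.2, kapi, if_neg, if_neg, mul_one]
        · simp only [loI, hiI, Fin.ext_iff, Fin.val_rev]; omega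
        · simp only [loI, Fin.ext_iff, Fin.val_rev]; omega
      · simp
    rw [e2]
    refine oneSite_B hN _ _ ?_
    simp only [loI, hiI, Fin.lt_def, Fin.val_rev]
    have := a.2
    omega
  · rw [opkk, tmat_mul, tmat_opKK, tmat_opKKinv, ten_mul]
    refine ten_comm_R0op _ ?_
    rw [Pi.mul_apply, Matrix.diagonal_mul_diagonal]
    refine oneSite_diag _ fun j => ?_
    have := kap_mul_kapi_rev a.rev j
    rwa [Fin.rev_rev] at this
  · rw [opkkInv, tmat_mul, tmat_opKK, tmat_opKKinv, ten_mul]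
    refine ten_comm_R0op _ ?_
    rw [Pi.mul_apply, Matrix.diagonal_mul_diagonal]
    exact oneSite_diag _ (kap_mul_kapi_rev a)

end Commute

/-! ### Specialisation of the generators at `q = 1` -/

section Specialise

variable {r m : ℕ}

/-- All entries of `A` are regular at `q = 1`, with values the entries of `Y`. -/
def MatVal {I : Type*} (A : Matrix I I Kq) (Y : Matrix I I ℚ) : Prop :=
  ∀ g f, HasVal (A g f) (Y g f)

theorem MatVal.add {I : Type*} {A B : Matrix I I Kq} {Y Z : Matrix I I ℚ}
    (hA : MatVal A Y) (hB : MatVal B Z) : MatVal (A + B) (Y + Z) :=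
  fun g f => (hA g f).add (hB g f)

theorem MatVal.smul {I : Type*} {A : Matrix I I Kq} {Y : Matrix I I ℚ} {t : Kq} {c : ℚ}
    (ht : HasVal t c) (hA : MatVal A Y) : MatVal (t • A) (c • Y) :=
  fun g f => ht.mul (hA g f)

theorem MatVal.mul {I : Type*} [Fintype I] {A B : Matrix I I Kq} {Y Z : Matrix I I ℚ}
    (hA : MatVal A Y) (hB : MatVal B Z) : MatVal (A * B) (Y * Z) := by
  intro g f
  rw [Matrix.mul_apply, Matrix.mul_apply]
  exact HasVal.sum _ fun i _ => (hA g i).mul (hB i f)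

theorem MatVal.sum {I ι : Type*} (s : Finset ι) {A : ι → Matrix I I Kq} {Y : ι → Matrix I I ℚ}
    (h : ∀ i ∈ s, MatVal (A i) (Y i)) : MatVal (∑ i ∈ s, A i) (∑ i ∈ s, Y i) := by
  intro g f
  rw [Matrix.sum_apply, Matrix.sum_apply]
  exact HasVal.sum _ fun i hi => h i hi g f

theorem MatVal.ten {I : Type*} [Fintype I] [DecidableEq I] {A : Fin m → Matrix I I Kq}
    {Y : Fin m → Matrix I I ℚ} (h : ∀ k, MatVal (A k) (Y k)) : MatVal (ten A) (ten Y) :=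
  fun g f => HasVal.prod _ fun k _ => h k (g k) (f k)

theorem matVal_diagonal {I : Type*} [DecidableEq I] {d : I → Kq} {c : I → ℚ}
    (h : ∀ i, HasVal (d i) (c i)) : MatVal (Matrix.diagonal d) (Matrix.diagonal c) := by
  intro g f
  rw [Matrix.diagonal_apply, Matrix.diagonal_apply]
  split_ifs
  · exact h g
  · exact hasVal_zero

theorem matVal_one {I : Type*} [DecidableEq I] : MatVal (1 : Matrix I I Kq) 1 := by
  rw [← Matrix.diagonal_one, ← Matrix.diagonal_one]
  exact matVal_diagonal fun _ => hasVal_one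

theorem matVal_single {I : Type*} [DecidableEq I] (i j : I) :
    MatVal (Matrix.single i j (1 : Kq)) (Matrix.single i j 1) := by
  intro g f
  rw [Matrix.single_apply, Matrix.single_apply]
  split_ifs
  · exact hasVal_one
  · exact hasVal_zero

theorem matVal_kap (a : Fin (2*r+3)) : MatVal (Matrix.diagonal (kap a)) 1 := by
  rw [← Matrix.diagonal_one]
  refine matVal_diagonal fun j => ?_
  rw [kap]
  split_ifs
  exacts [hasVal_q, hasVal_qinv, hasVal_one]

theorem matVal_kapi (a : Fin (2*r+3)) : MatVal (Matrix.diagonal (kapi a)) 1 := by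
  rw [← Matrix.diagonal_one]
  refine matVal_diagonal fun j => ?_
  rw [kapi]
  split_ifs
  exacts [hasVal_qinv, hasVal_q, hasVal_one]

theorem matVal_opEE (a : Fin (2*r+3)) :
    MatVal (tmat (opEE r m a)) (prim m (Matrix.single (loI a) (hiI a) 1)) := by
  rw [tmat_opEE, prim_apply]
  refine MatVal.sum _ fun j _ => MatVal.ten fun k => ?_
  rw [chainE]
  by_cases h : k = j
  · subst h; simpa using matVal_single _ _
  · rw [Pi.mulSingle_eq_of_ne h, if_neg h]
    split_ifs
    · exact matVal_one
    · exact matVal_kapi a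

theorem matVal_opFF (a : Fin (2*r+3)) :
    MatVal (tmat (opFF r m a)) (prim m (Matrix.single (hiI a) (loI a) 1)) := by
  rw [tmat_opFF, prim_apply]
  refine MatVal.sum _ fun j _ => MatVal.ten fun k => ?_
  rw [chainF]
  by_cases h : k = j
  · subst h; simpa using matVal_single _ _
  · rw [Pi.mulSingle_eq_of_ne h, if_neg h]
    split_ifs
    · exact matVal_kap a
    · exact matVal_one

theorem matVal_opKKinv (a : Fin (2*r+3)) : MatVal (tmat (opKKinv r m a)) 1 := by
  rw [tmat_opKKinv, ← ten_one]
  exact MatVal.ten fun k => matVal_kapi a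

/-- The specialisations at `q = 1` of those elements of `Φ(U_q^ı)` that are regular there. -/
def specAlg (r m : ℕ) : Subalgebra ℚ (Matrix (Fin m → Idx r) (Fin m → Idx r) ℚ) where
  carrier := {Y | ∃ A ∈ PhiU r m, MatVal (tmat A) Y}
  mul_mem' := by
    rintro Y Z ⟨A, hA, hY⟩ ⟨B, hB, hZ⟩
    exact ⟨A * B, mul_mem hA hB, by rw [tmat_mul]; exact hY.mul hZ⟩
  add_mem' := by
    rintro Y Z ⟨A, hA, hY⟩ ⟨B, hB, hZ⟩
    exact ⟨A + B, add_mem hA hB, by rw [tmat_add]; exact hY.add hZ⟩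
  algebraMap_mem' := by
    intro c
    refine ⟨algebraMap ℚ Kq c • 1, (PhiU r m).smul_mem (PhiU r m).one_mem _, ?_⟩
    have e : algebraMap ℚ (Matrix (Fin m → Idx r) (Fin m → Idx r) ℚ) c = c • 1 :=
      Algebra.algebraMap_eq_smul_one c
    rw [tmat_smul, e]
    refine MatVal.smul (hasVal_rat c) ?_
    rw [tmat, map_one]
    exact matVal_one

/-- The simple generators of the classical algebra are the specialisations of the `ℬ_i`, `i ≠ 0`,
and of `ℬ_0 - 1`. -/
theorem prim_Er_mem_specAlg (i j : Idx r) (h : (i : ℕ) + 1 = j) : prim m (Er i j) ∈ specAlg r m := by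
  have hj := j.2
  obtain ⟨a, rfl, rfl⟩ : ∃ a : Fin (2*r+3), i = loI a ∧ j = hiI a :=
    ⟨⟨i, by omega⟩, rfl, Fin.ext h.symm⟩
  have e : Er (loI a) (hiI a) = Matrix.single (loI a) (hiI a) 1 +
      Matrix.single (hiI a.rev) (loI a.rev) 1 := by
    rw [Er, rev_loI, rev_hiI]
  rw [e, map_add]
  by_cases ha : a = midI r
  · subst ha
    have hm : (midI r).rev = midI r := by
      ext; simp only [Fin.val_rev, midI]; omega
    rw [hm]
    have h1 : prim m (Matrix.single (loI (midI r)) (hiI (midI r)) (1:ℚ)) +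
        (1:ℚ) • (prim m (Matrix.single (hiI (midI r)) (loI (midI r)) 1) * 1) + 1 ∈ specAlg r m := by
      refine ⟨opB0 r m, Algebra.subset_adjoin (Or.inl (Or.inl (Or.inl rfl))), ?_⟩
      rw [opB0, tmat_add, tmat_add, tmat_smul, tmat_mul]
      exact ((matVal_opEE _).add (MatVal.smul hasVal_q
        ((matVal_opFF _).mul (matVal_opKKinv _)))).add (matVal_opKKinv _)
    have h2 := (specAlg r m).sub_mem h1 (specAlg r m).one_mem
    rwa [add_sub_cancel_right, one_smul, mul_one] at h2
  · refine ⟨opB r m a, Algebra.subset_adjoin (Or.inl (Or.inl (Or.inr ⟨a, ha, rfl⟩))), ?_⟩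
    rw [opB, tmat_add, tmat_mul, ← mul_one (prim m (Matrix.single (hiI a.rev) (loI a.rev) 1))]
    exact (matVal_opEE _).add ((matVal_opFF _).mul (matVal_opKKinv _))

/-- The specialisation at `q = 1` of a matrix commuting with the Hecke operators is invariant under
the Weyl group of type `B`, hence by the classical theorem is the specialisation of an element of
`Φ(U_q^ı)`. -/
theorem spec_mem {n : ℕ} (X : Matrix (Fin (n+1) → Idx r) (Fin (n+1) → Idx r) Kq)
    (Y : Matrix (Fin (n+1) → Idx r) (Fin (n+1) → Idx r) ℚ) (hXY : MatVal X Y)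
    (h0 : tmat (R0op r (n+1)) * X = X * tmat (R0op r (n+1)))
    (hs : ∀ p : Fin n, tmat (Rsw r (n+1) p) * X = X * tmat (Rsw r (n+1) p)) :
    Y ∈ specAlg r (n+1) := by
  have hz : ∀ (P : Prop) [Decidable P] g f,
      HasVal (if P then (qv⁻¹ - qv) * X g f else 0) 0 := by
    intro P _ g f
    split_ifs
    · simpa using hasVal_qdiff.mul (hXY g f)
    · exact hasVal_zero
  refine invariant_mem _ prim_Er_mem_specAlg Y ?_ ?_
  · intro p
    have hfix : ∀ g : Fin (n+1) → Idx r, g p.castSucc = g p.succ →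
        g ∘ Equiv.swap p.castSucc p.succ = g := by
      intro g hg
      funext k
      rw [Function.comp_apply, Equiv.swap_apply_def]
      split_ifs with h1 h2
      · rw [h1, hg]
      · rw [h2, hg]
      · rfl
    have key : ∀ g f, Y (g ∘ Equiv.swap p.castSucc p.succ) f =
        Y g (f ∘ Equiv.swap p.castSucc p.succ) := by
      intro g f
      have h := (comm_Rsw_iff p X).1 (hs p) g f
      refine HasVal.unique (x := if g p.castSucc = g p.succ then qv⁻¹ * X g f
        else X (g ∘ Equiv.swap p.castSucc p.succ) f +
        (if g p.succ < g p.castSucc then (qv⁻¹ - qv) * X g f else 0)) ?_ ?_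
      · split_ifs with h1
        · rw [hfix g h1]; simpa using hasVal_qinv.mul (hXY g f)
        · simpa using (hXY _ f).add (hz True g f)
        · simpa using hXY _ f
      · rw [h]
        split_ifs with h1
        · rw [hfix f h1]; simpa using hasVal_qinv.mul (hXY g f)
        · simpa using (hXY g _).add (hz True g f)
        · simpa using hXY g _
    intro g f
    rw [key]
    congr 1
    funext k
    simp
  · have key : ∀ g f, Y (Function.update g 0 (g 0).rev) f =
        Y g (Function.update f 0 (f 0).rev) := by
      intro g f
      have h := (comm_R0op_iff X).1 h0 g f
      have h1 := (hXY (Function.update g 0 (g 0).rev) f).add (hz (g 0 < (g 0).rev) g f)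
      have h2 := (hXY g (Function.update f 0 (f 0).rev)).add (hz (f 0 < (f 0).rev) g f)
      rw [h] at h1
      simpa using h1.unique h2
    intro g f
    rw [key]
    simp

end Specialise

/-! ### Double centralizers -/

section Main

variable {r n : ℕ}

theorem RopN_cases {i : ℕ} (hi : i < n + 1) :
    RopN r (n+1) i = R0op r (n+1) ∨ ∃ p : Fin n, RopN r (n+1) i = Rsw r (n+1) p := by
  rcases i with _ | i
  · exact Or.inl rfl
  · exact Or.inr ⟨⟨i, by omega⟩, rfl⟩

theorem R0op_mem : R0op r (n+1) ∈ PsiHB r (n+1) :=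
  Algebra.subset_adjoin ⟨0, Nat.succ_pos n, rfl⟩

theorem Rsw_mem (p : Fin n) : Rsw r (n+1) p ∈ PsiHB r (n+1) :=
  Algebra.subset_adjoin ⟨p + 1, Nat.succ_lt_succ p.2, rfl⟩

theorem PhiU_comm_PsiHB {B C : Module.End Kq (TP r (n+1))} (hB : B ∈ PhiU r (n+1))
    (hC : C ∈ PsiHB r (n+1)) : B * C = C * B := by
  have h1 : PhiU r (n+1) ≤ Subalgebra.centralizer Kq
      {A | ∃ i : ℕ, i < n + 1 ∧ A = RopN r (n+1) i} := by
    refine Algebra.adjoin_le fun A hA => ?_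
    rw [SetLike.mem_coe, Subalgebra.mem_centralizer_iff]
    rintro _ ⟨i, hi, rfl⟩
    apply LinearMap.toMatrixAlgEquiv'.injective
    rw [map_mul, map_mul]
    rcases RopN_cases (r := r) hi with h | ⟨p, h⟩
    · rw [h]; exact UiSet_comm_R0op hA
    · rw [h]; exact UiSet_comm_Rsw p hA
  have h2 : PsiHB r (n+1) ≤ Subalgebra.centralizer Kq (PhiU r (n+1)) := by
    refine Algebra.adjoin_le fun A hA => ?_
    rw [SetLike.mem_coe, Subalgebra.mem_centralizer_iff]
    intro B hB
    exact ((Subalgebra.mem_centralizer_iff Kq).1 (h1 hB) A hA).symm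
  exact (Subalgebra.mem_centralizer_iff Kq).1 (h2 hC) B hB

/-- A proper inclusion of `Φ(U_q^ı)` in the centralizer of `Ψ(H(B_m))` would give a nonzero `X` in
the centralizer orthogonal to `Φ(U_q^ı)`. Rescaled, `X` has a nonzero specialisation at `q = 1`,
which by the classical result is the specialisation of some element of `Φ(U_q^ı)`; being
orthogonal to itself, it vanishes. -/
theorem mem_PhiU_of_comm (A : Module.End Kq (TP r (n+1)))
    (hA : ∀ C ∈ PsiHB r (n+1), A * C = C * A) : A ∈ PhiU r (n+1) := by
  set W : Submodule Kq (Matrix (Fin (n+1) → Idx r) (Fin (n+1) → Idx r) Kq) :=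
    (Subalgebra.toSubmodule (PhiU r (n+1))).map
      (LinearMap.toMatrixAlgEquiv' (R := Kq) (n := Fin (n+1) → Idx r)).toLinearMap with hW
  obtain ⟨_, ⟨B, hB, rfl⟩, X, hX, hAX⟩ := exists_orth_decomp W (tmat A)
  have hBX : tmat (A - B) = X := by
    rw [tmat, map_sub]
    exact sub_eq_iff_eq_add'.2 hAX.symm
  have hcomm : ∀ C ∈ PsiHB r (n+1), tmat C * X = X * tmat C := by
    intro C hC
    rw [← hBX, ← tmat_mul, ← tmat_mul, mul_sub, sub_mul, hA C hC, PhiU_comm_PsiHB hB hC]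
  suffices hX0 : X = 0 by
    rw [hX0, tmat, map_eq_zero_iff _ LinearMap.toMatrixAlgEquiv'.injective, sub_eq_zero] at hBX
    rw [hBX]; exact hB
  by_contra hX0
  obtain ⟨t, -, c, hc, p, hp⟩ := exists_scale
    (fun p : (Fin (n+1) → Idx r) × (Fin (n+1) → Idx r) => X p.1 p.2)
    (fun h => hX0 (Matrix.ext fun i j => congrFun h (i, j)))
  obtain ⟨D, hD, hDc⟩ := spec_mem (t • X) (fun g f => c (g, f)) (fun g f => hc (g, f))
    (by rw [Matrix.mul_smul, Matrix.smul_mul, hcomm _ R0op_mem])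
    (fun p => by rw [Matrix.mul_smul, Matrix.smul_mul, hcomm _ (Rsw_mem p)])
  have horth : frob Kq _ (tmat D) (t • X) = 0 := by
    have h : frob Kq _ (tmat D) X = 0 :=
      (LinearMap.BilinForm.mem_orthogonal_iff.1 hX) (tmat D) ⟨D, hD, rfl⟩
    rw [map_smul, h, smul_zero]
  rw [frob_eq_sum] at horth
  have hval : HasVal (∑ p : (Fin (n+1) → Idx r) × (Fin (n+1) → Idx r),
      tmat D p.1 p.2 * (t • X) p.1 p.2) (∑ p, c p * c p) :=
    HasVal.sum _ fun p _ => (hDc p.1 p.2).mul (hc p)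
  rw [horth] at hval
  have h3 := hval.unique hasVal_zero
  rw [Finset.sum_eq_zero_iff_of_nonneg fun i _ => mul_self_nonneg _] at h3
  exact hp (mul_self_eq_zero.1 (h3 p (Finset.mem_univ p)))

/-- The Hecke operators have symmetric matrices, so the bicommutant argument applies. -/
theorem mem_PsiHB_of_comm (A : Module.End Kq (TP r (n+1)))
    (hA : ∀ B ∈ PhiU r (n+1), A * B = B * A) : A ∈ PsiHB r (n+1) := by
  set S : Subalgebra Kq (Matrix (Fin (n+1) → Idx r) (Fin (n+1) → Idx r) Kq) :=
    (PsiHB r (n+1)).map (LinearMap.toMatrixAlgEquiv' (R := Kq) (n := Fin (n+1) → Idx r)).toAlgHom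
    with hS
  have hmem : ∀ C ∈ PsiHB r (n+1), tmat C ∈ S := fun C hC => ⟨C, hC, rfl⟩
  have htr : ∀ b ∈ S, b.transpose ∈ S := by
    rintro _ ⟨C, hC, rfl⟩
    change (tmat C).transpose ∈ S
    induction hC using Algebra.adjoin_induction with
    | mem C hC =>
      obtain ⟨i, hi, rfl⟩ := hC
      rcases RopN_cases (r := r) hi with h | ⟨p, h⟩
      · rw [h, R0op_symm]; exact hmem _ R0op_mem
      · rw [h, Rsw_symm]; exact hmem _ (Rsw_mem p)
    | algebraMap t =>
      rw [Algebra.algebraMap_eq_smul_one, tmat_smul, tmat, map_one, Matrix.transpose_smul,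
        Matrix.transpose_one]
      exact S.smul_mem S.one_mem t
    | add C D _ _ h1 h2 => rw [tmat_add, Matrix.transpose_add]; exact S.add_mem h1 h2
    | mul C D _ _ h1 h2 => rw [tmat_mul, Matrix.transpose_mul]; exact S.mul_mem h2 h1
  have h : tmat A ∈ S := by
    refine mem_of_bicommutant S htr _ fun Y hY => ?_
    obtain ⟨B, rfl⟩ := LinearMap.toMatrixAlgEquiv'.surjective Y
    have hB : B ∈ PhiU r (n+1) := by
      refine mem_PhiU_of_comm B fun C hC => ?_
      apply LinearMap.toMatrixAlgEquiv'.injective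
      rw [map_mul, map_mul]
      exact hY _ (hmem C hC)
    change tmat A * tmat B = tmat B * tmat A
    rw [← tmat_mul, hA B hB, tmat_mul]
  obtain ⟨C, hC, hCA⟩ := h
  rw [← LinearMap.toMatrixAlgEquiv'.injective hCA]
  exact hC

end Main

/-- **Theorem 1.6 (Bao–Wang ıSchur duality).** The subalgebras `Φ(U_q^ı)` and `Ψ(H(B_m))`
of `End_K(V̄^⊗m)` commute with each other and form double centralizers. -/
theorem bao_wang_iSchur_duality (r m : ℕ) (hr : 1 ≤ r) (hm : 2 ≤ m) :
    (∀ B ∈ PhiU r m, ∀ C ∈ PsiHB r m, B * C = C * B) ∧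
    (∀ A : Module.End Kq (TP r m),
      (∀ B ∈ PhiU r m, A * B = B * A) ↔ A ∈ PsiHB r m) ∧
    (∀ A : Module.End Kq (TP r m),
      (∀ C ∈ PsiHB r m, A * C = C * A) ↔ A ∈ PhiU r m) := by
  obtain ⟨n, rfl⟩ : ∃ n, m = n + 1 := ⟨m - 1, by omega⟩
  exact ⟨fun B hB C hC => PhiU_comm_PsiHB hB hC,
    fun A => ⟨mem_PsiHB_of_comm A, fun hA B hB => (PhiU_comm_PsiHB hB hA).symm⟩,
    fun A => ⟨mem_PhiU_of_comm A, fun hA C hC => PhiU_comm_PsiHB hA hC⟩⟩
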